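/- Let δ > 0 and let u ∈ C²(S² ∩ B_δ(S) \ {S}) be a (−1)-homogeneous axisymmetric solution of the stationary Navier–Stokes equations, and let τ := lim_{x∈S², x→S} |x'| u_θ(x) (which exists and is finite). Suppose τ = 2. Then η := lim_{x∈S², x→S} (|x'| u_θ(x) − 2) ln|x'| exists and η ∈ {0, 2}. If η = 0, then lim_{x∈S², x→S} |x'|^ε u_r(x) = 0 for every ε > 0, and either |x'| u_φ is constant on S² near S or lim_{x∈S², x→S} |x'| u_φ(x)/ln|x'| exists, is finite, and is nonzero. If η = 2, then lim_{x∈S², x→S} |x'|² (ln|x'|)² u_r(x) = −2, and lim_{x∈S², x→S} |x'| u_φ(x) exists and is finite. -/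

import Mathlib

noncomputable section

open Real Filter MeasureTheory Metric Topology
open scoped ENNReal InnerProductSpace

abbrev V3 := EuclideanSpace ℝ (Fin 3)
abbrev V2 := EuclideanSpace ℝ (Fin 2)

/-- standard basis vector in `ℝ³` -/
def e3 (j : Fin 3) : V3 := EuclideanSpace.single j 1

/-- partial derivative `∂_j f` -/
def pd (j : Fin 3) (f : V3 → ℝ) (x : V3) : ℝ := fderiv ℝ f x (e3 j)

/-- Laplacian on `ℝ³` -/
def lap3 (f : V3 → ℝ) (x : V3) : ℝ := ∑ j, pd j (fun y => pd j f y) x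

/-- stationary Navier–Stokes equations `-Δu + (u·∇)u + ∇p = 0`, `div u = 0` at `x` -/
def NSEq (u : V3 → V3) (p : V3 → ℝ) (x : V3) : Prop :=
  (∀ i, - lap3 (fun z => u z i) x + (∑ j, u x j * pd j (fun z => u z i) x) + pd i p x = 0)
  ∧ (∑ j, pd j (fun z => u z j) x) = 0

/-- stationary Euler equations `(u·∇)u + ∇p = 0`, `div u = 0` at `x` -/
def EulerEq (u : V3 → V3) (p : V3 → ℝ) (x : V3) : Prop :=
  (∀ i, (∑ j, u x j * pd j (fun z => u z i) x) + pd i p x = 0)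
  ∧ (∑ j, pd j (fun z => u z j) x) = 0

/-- south pole -/
def S3 : V3 := EuclideanSpace.single 2 (-1)
/-- north pole -/
def N3 : V3 := EuclideanSpace.single 2 1

/-- the unit sphere `S²` -/
def sphere2 : Set V3 := Metric.sphere (0 : V3) 1

/-- the open cone over a subset of the unit sphere -/
def cone3 (Ω : Set V3) : Set V3 := {x : V3 | x ≠ 0 ∧ (‖x‖⁻¹ • x) ∈ Ω}

/-- `|x'| = √(x₁² + x₂²)` -/
def rho (x : V3) : ℝ := Real.sqrt ((x 0) ^ 2 + (x 1) ^ 2)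

/-- the `x₃`-axis `{x' = 0}` -/
def axis3 : Set V3 := {x : V3 | x 0 = 0 ∧ x 1 = 0}

/-- `Ω_{a,b,R} = {a < x₃ < b, |x'| < R}` -/
def OmegaR (a b R : ℝ) : Set V3 := {x : V3 | a < x 2 ∧ x 2 < b ∧ rho x < R}

/-- build a point of `ℝ³` from `x' ∈ ℝ²` and `x₃ ∈ ℝ` -/
def emb (y : V2) (t : ℝ) : V3 := (EuclideanSpace.equiv (Fin 3) ℝ).symm ![y 0, y 1, t]

/-- spherical component `u_r = u · e_r` -/
def uRc (u : V3 → V3) (x : V3) : ℝ := (u x 0 * x 0 + u x 1 * x 1 + u x 2 * x 2) / ‖x‖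

/-- spherical component `u_θ = u · e_θ` -/
def uTc (u : V3 → V3) (x : V3) : ℝ :=
  (u x 0 * x 0 * x 2 + u x 1 * x 1 * x 2) / (‖x‖ * rho x) - u x 2 * rho x / ‖x‖

/-- spherical component `u_φ = u · e_φ` -/
def uPc (u : V3 → V3) (x : V3) : ℝ := (-(u x 0) * x 1 + u x 1 * x 0) / rho x

/-- axisymmetry on a set: the spherical components are independent of the meridian angle -/
def AxisymOn (u : V3 → V3) (Ω : Set V3) : Prop :=
  ∀ x ∈ Ω, ∀ y ∈ Ω, ‖x‖ = ‖y‖ → x 2 = y 2 →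
    uRc u x = uRc u y ∧ uTc u x = uTc u y ∧ uPc u x = uPc u y

/-- spherical frame vector `e_r` -/
def eRv (x : V3) : V3 := ‖x‖⁻¹ • x

/-- spherical frame vector `e_θ` -/
def eThv (x : V3) : V3 := (EuclideanSpace.equiv (Fin 3) ℝ).symm
  ![x 2 * x 0 / (‖x‖ * rho x), x 2 * x 1 / (‖x‖ * rho x), -(rho x) / ‖x‖]

/-- spherical frame vector `e_φ` -/
def ePhv (x : V3) : V3 := (EuclideanSpace.equiv (Fin 3) ℝ).symm ![-(x 1) / rho x, x 0 / rho x, 0]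

/-- the spherical cap `S² ∩ B_δ(S) \ {S}` -/
def NSCap (δ : ℝ) : Set V3 := (sphere2 ∩ Metric.ball S3 δ) \ {S3}

/-- the spherical cap `S² ∩ B_δ(S)` -/
def NSCapFull (δ : ℝ) : Set V3 := sphere2 ∩ Metric.ball S3 δ



lemma mono_ev {g g' : ℝ → ℝ} (h : ∀ᶠ t in 𝓝[>] (0:ℝ), HasDerivAt g (g' t) t)
    (h0 : ∀ᶠ t in 𝓝[>] (0:ℝ), 0 ≤ g' t) : ∃ d > 0, MonotoneOn g (Set.Ioo 0 d) := by
  obtain ⟨d, hd, hs⟩ := mem_nhdsGT_iff_exists_Ioo_subset.1 (h.and h0)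
  refine ⟨d, hd, ?_⟩
  apply monotoneOn_of_deriv_nonneg (convex_Ioo 0 d)
  · intro t ht
    exact (hs ht).1.continuousAt.continuousWithinAt
  · rw [interior_Ioo]
    intro t ht
    exact (hs ht).1.differentiableAt.differentiableWithinAt
  · rw [interior_Ioo]
    intro t ht
    rw [(hs ht).1.deriv]
    exact (hs ht).2

/-- eventually comparing with a later value -/
lemma mono_le {g g' : ℝ → ℝ} (h : ∀ᶠ t in 𝓝[>] (0:ℝ), HasDerivAt g (g' t) t)
    (h0 : ∀ᶠ t in 𝓝[>] (0:ℝ), 0 ≤ g' t) : ∃ c, ∀ᶠ t in 𝓝[>] (0:ℝ), g t ≤ c := by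
  obtain ⟨d, hd, hm⟩ := mono_ev h h0
  refine ⟨g (d/2), ?_⟩
  filter_upwards [Ioo_mem_nhdsGT (show (0:ℝ) < d/2 by positivity)] with t ht
  exact hm ⟨ht.1, by linarith [ht.2]⟩ ⟨by positivity, by linarith⟩ ht.2.le

lemma mono_tendsto {g g' : ℝ → ℝ} (h : ∀ᶠ t in 𝓝[>] (0:ℝ), HasDerivAt g (g' t) t)
    (h0 : ∀ᶠ t in 𝓝[>] (0:ℝ), 0 ≤ g' t) (c : ℝ) (hc : ∀ᶠ t in 𝓝[>] (0:ℝ), c ≤ g t) :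
    ∃ l, Tendsto g (𝓝[>] 0) (𝓝 l) := by
  obtain ⟨d, hd, hm⟩ := mono_ev h h0
  obtain ⟨e, he, hs⟩ := mem_nhdsGT_iff_exists_Ioo_subset.1 hc
  have hm' : MonotoneOn g (Set.Ioo 0 (min d e)) :=
    hm.mono (Set.Ioo_subset_Ioo_right (min_le_left _ _))
  have hmin : 0 < min d e := lt_min hd he
  refine ⟨_, hm'.tendsto_nhdsWithin_Ioo_right (Set.nonempty_Ioo.2 hmin) ⟨c, ?_⟩⟩
  rintro _ ⟨t, ht, rfl⟩
  exact hs ⟨ht.1, ht.2.trans_le (min_le_right _ _)⟩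

lemma mono_ge_lim {g g' : ℝ → ℝ} (h : ∀ᶠ t in 𝓝[>] (0:ℝ), HasDerivAt g (g' t) t)
    (h0 : ∀ᶠ t in 𝓝[>] (0:ℝ), 0 ≤ g' t) {l : ℝ} (hl : Tendsto g (𝓝[>] 0) (𝓝 l)) :
    ∀ᶠ t in 𝓝[>] (0:ℝ), l ≤ g t := by
  obtain ⟨d, hd, hm⟩ := mono_ev h h0
  filter_upwards [Ioo_mem_nhdsGT hd] with t ht
  refine le_of_tendsto hl ?_
  filter_upwards [Ioo_mem_nhdsGT ht.1] with s hs
  exact hm ⟨hs.1, hs.2.trans ht.2⟩ ht hs.2.le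

lemma int2 {g g' Φ φ : ℝ → ℝ} (h : ∀ᶠ t in 𝓝[>] (0:ℝ), HasDerivAt g (g' t) t)
    (hΦ : ∀ᶠ t in 𝓝[>] (0:ℝ), HasDerivAt Φ (φ t) t)
    (hle : ∀ᶠ t in 𝓝[>] (0:ℝ), |g' t| ≤ φ t) (h0 : Tendsto Φ (𝓝[>] 0) (𝓝 0)) :
    ∃ l, Tendsto g (𝓝[>] 0) (𝓝 l) ∧ ∀ᶠ t in 𝓝[>] (0:ℝ), |g t - l| ≤ Φ t := by
  have hp : ∀ᶠ t in 𝓝[>] (0:ℝ), HasDerivAt (fun t => Φ t + g t) (φ t + g' t) t := by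
    filter_upwards [h, hΦ] with t h1 h2 using h2.add h1
  have hm : ∀ᶠ t in 𝓝[>] (0:ℝ), HasDerivAt (fun t => Φ t - g t) (φ t - g' t) t := by
    filter_upwards [h, hΦ] with t h1 h2 using h2.sub h1
  have hp0 : ∀ᶠ t in 𝓝[>] (0:ℝ), 0 ≤ φ t + g' t := by
    filter_upwards [hle] with t h1
    linarith [neg_abs_le (g' t)]
  have hm0 : ∀ᶠ t in 𝓝[>] (0:ℝ), 0 ≤ φ t - g' t := by
    filter_upwards [hle] with t h1
    linarith [le_abs_self (g' t)]
  obtain ⟨c, hc⟩ := mono_le hm hm0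
  have hb : ∀ᶠ t in 𝓝[>] (0:ℝ), (-c - 2) ≤ Φ t + g t := by
    filter_upwards [hc, h0.eventually (lt_mem_nhds (show (-1:ℝ) < 0 by norm_num))] with t h1 h2
    linarith
  obtain ⟨l, hl⟩ := mono_tendsto hp hp0 _ hb
  have hg : Tendsto g (𝓝[>] 0) (𝓝 l) := by
    have := hl.sub h0
    simpa using this
  refine ⟨l, hg, ?_⟩
  have h1 := mono_ge_lim hp hp0 hl
  have h2 := mono_ge_lim hm hm0 (h0.sub hg)
  filter_upwards [h1, h2] with t h1 h2
  rw [abs_le]; constructor <;> linarith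

lemma rpow_deriv_ev (b : ℝ) : ∀ᶠ t in 𝓝[>] (0:ℝ), HasDerivAt (fun t : ℝ => t ^ b) (b * t ^ (b-1)) t := by
  filter_upwards [self_mem_nhdsWithin] with t ht
  exact Real.hasDerivAt_rpow_const (Or.inl (ne_of_gt ht))

lemma rpow_tend (b : ℝ) (hb : 0 < b) : Tendsto (fun t : ℝ => t ^ b) (𝓝[>] (0:ℝ)) (𝓝 0) := by
  have := (Real.continuousAt_rpow_const 0 b (Or.inr hb.le)).tendsto
  rw [Real.zero_rpow hb.ne'] at this
  exact this.mono_left nhdsWithin_le_nhds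

lemma int2pow {g g' : ℝ → ℝ} (h : ∀ᶠ t in 𝓝[>] (0:ℝ), HasDerivAt g (g' t) t) {b : ℝ} (hb : 0 < b)
    (hO : g' =O[𝓝[>] 0] fun t : ℝ => t ^ (b-1)) :
    ∃ l, Tendsto g (𝓝[>] 0) (𝓝 l) ∧ (fun t => g t - l) =O[𝓝[>] 0] fun t : ℝ => t ^ b := by
  obtain ⟨C, hC⟩ := hO.bound
  have hd : ∀ᶠ t in 𝓝[>] (0:ℝ), HasDerivAt (fun t : ℝ => C / b * t ^ b) (C * t ^ (b-1)) t := by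
    filter_upwards [rpow_deriv_ev b] with t ht
    have e : C * t ^ (b-1) = C / b * (b * t ^ (b-1)) := by
      rw [← mul_assoc, div_mul_cancel₀ _ hb.ne']
    rw [e]
    exact ht.const_mul (C/b)
  obtain ⟨l, hl, hle⟩ := int2 h hd (by
    filter_upwards [hC, self_mem_nhdsWithin] with t h1 ht
    have ht : 0 < t := ht
    rwa [Real.norm_eq_abs, Real.norm_eq_abs, abs_of_nonneg (rpow_nonneg ht.le _)] at h1)
    (by simpa using (rpow_tend b hb).const_mul (C/b))
  refine ⟨l, hl, ?_⟩
  refine Asymptotics.IsBigO.of_bound (C/b) ?_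
  filter_upwards [hle, self_mem_nhdsWithin] with t h1 ht
  have ht : 0 < t := ht
  rwa [Real.norm_eq_abs, Real.norm_eq_abs, abs_of_nonneg (rpow_nonneg ht.le _)]

lemma one_isBigO_rpow_neg (a : ℝ) (ha : 0 ≤ a) : (fun _ : ℝ => (1:ℝ)) =O[𝓝[>] 0] fun t : ℝ => t ^ (-a) := by
  refine Asymptotics.IsBigO.of_bound 1 ?_
  filter_upwards [Ioo_mem_nhdsGT (show (0:ℝ) < 1 by norm_num)] with t ht
  rw [Real.norm_eq_abs, Real.norm_eq_abs, abs_of_nonneg (rpow_nonneg ht.1.le _), abs_one, one_mul]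
  exact Real.one_le_rpow_of_pos_of_le_one_of_nonpos ht.1 ht.2.le (by linarith)

lemma int1pow {g g' : ℝ → ℝ} (h : ∀ᶠ t in 𝓝[>] (0:ℝ), HasDerivAt g (g' t) t) {a : ℝ} (ha : 0 < a)
    (hO : g' =O[𝓝[>] 0] fun t : ℝ => t ^ (-a-1)) :
    g =O[𝓝[>] 0] fun t : ℝ => t ^ (-a) := by
  obtain ⟨C, hC⟩ := hO.bound
  have hd : ∀ᶠ t in 𝓝[>] (0:ℝ), HasDerivAt (fun t : ℝ => -(C / a) * t ^ (-a)) (C * t ^ (-a-1)) t := by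
    filter_upwards [rpow_deriv_ev (-a)] with t ht
    have e : C * t ^ (-a-1) = -(C / a) * (-a * t ^ (-a-1)) := by
      rw [← mul_assoc, neg_mul_neg, div_mul_cancel₀ _ ha.ne']
    rw [e]
    exact ht.const_mul (-(C/a))
  have hC' : ∀ᶠ t in 𝓝[>] (0:ℝ), |g' t| ≤ C * t ^ (-a-1) := by
    filter_upwards [hC, self_mem_nhdsWithin] with t h1 ht
    have ht : 0 < t := ht
    rwa [Real.norm_eq_abs, Real.norm_eq_abs, abs_of_nonneg (rpow_nonneg ht.le _)] at h1
  obtain ⟨c1, h1⟩ := mono_le (g := fun t => -(C / a) * t ^ (-a) + g t) (g' := fun t => C * t ^ (-a-1) + g' t)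
    (by filter_upwards [h, hd] with t h1 h2 using h2.add h1)
    (by filter_upwards [hC'] with t h1
        linarith [neg_abs_le (g' t)])
  obtain ⟨c2, h2⟩ := mono_le (g := fun t => -(C / a) * t ^ (-a) - g t) (g' := fun t => C * t ^ (-a-1) - g' t)
    (by filter_upwards [h, hd] with t h1 h2 using h2.sub h1)
    (by filter_upwards [hC'] with t h1
        linarith [le_abs_self (g' t)])
  have : g =O[𝓝[>] 0] fun t : ℝ => C / a * t ^ (-a) + (|c1| + |c2|) * 1 := by
    refine Asymptotics.IsBigO.of_bound 1 ?_
    filter_upwards [h1, h2] with t h1 h2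
    rw [one_mul, Real.norm_eq_abs, Real.norm_eq_abs]
    refine le_trans ?_ (le_abs_self _)
    rw [abs_le]
    constructor <;> linarith [le_abs_self c1, le_abs_self c2, abs_nonneg c1, abs_nonneg c2]
  refine this.trans (Asymptotics.IsBigO.add ?_ ?_)
  · exact (Asymptotics.isBigO_refl _ _).const_mul_left _
  · exact (one_isBigO_rpow_neg a ha.le).const_mul_left _

lemma rpow_isBigO {a b : ℝ} (h : b ≤ a) : (fun t : ℝ => t ^ a) =O[𝓝[>] 0] fun t : ℝ => t ^ b := by
  refine Asymptotics.IsBigO.of_bound 1 ?_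
  filter_upwards [Ioo_mem_nhdsGT (show (0:ℝ) < 1 by norm_num)] with t ht
  rw [Real.norm_eq_abs, Real.norm_eq_abs, abs_of_nonneg (rpow_nonneg ht.1.le _), abs_of_nonneg (rpow_nonneg ht.1.le _), one_mul]
  exact Real.rpow_le_rpow_of_exponent_ge ht.1 ht.2.le h

lemma rpow_mul_isBigO {f g : ℝ → ℝ} {a b c : ℝ} (hf : f =O[𝓝[>] 0] fun t : ℝ => t ^ a)
    (hg : g =O[𝓝[>] 0] fun t : ℝ => t ^ b) (h : c ≤ a + b) :
    (fun t => f t * g t) =O[𝓝[>] 0] fun t : ℝ => t ^ c := by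
  refine ((hf.mul hg).congr' EventuallyEq.rfl ?_).trans (rpow_isBigO h)
  filter_upwards [self_mem_nhdsWithin] with t ht
  rw [Real.rpow_add ht]

lemma inv_isBigO : (fun t : ℝ => 1 / (t * (2 - t))) =O[𝓝[>] 0] fun t : ℝ => t ^ (-1:ℝ) := by
  refine Asymptotics.IsBigO.of_bound 1 ?_
  filter_upwards [Ioo_mem_nhdsGT (show (0:ℝ) < 1 by norm_num)] with t ht
  rw [Real.norm_eq_abs, Real.norm_eq_abs, Real.rpow_neg_one, one_mul, one_div, abs_inv, abs_inv,
    abs_mul]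
  have h1 : |t| = t := abs_of_pos ht.1
  have h2 : |2 - t| = 2 - t := abs_of_pos (by linarith [ht.2])
  rw [h1, h2]
  exact inv_anti₀ ht.1 (by nlinarith [ht.1, ht.2])

lemma tlim_zero {F F1 : ℝ → ℝ} (h : ∀ᶠ t in 𝓝[>] (0:ℝ), HasDerivAt F (F1 t) t) {c m : ℝ}
    (hF : Tendsto F (𝓝[>] 0) (𝓝 c)) (hm : Tendsto (fun t => t * F1 t) (𝓝[>] 0) (𝓝 m)) : m = 0 := by
  have key : ∀ (F F1 : ℝ → ℝ) (c m : ℝ), (∀ᶠ t in 𝓝[>] (0:ℝ), HasDerivAt F (F1 t) t) →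
    Tendsto F (𝓝[>] 0) (𝓝 c) → Tendsto (fun t => t * F1 t) (𝓝[>] 0) (𝓝 m) → m ≤ 0 := by
    intro F F1 c m h hF hm
    by_contra! hpos
    obtain ⟨k, hk⟩ := mono_le (g := fun t => F t - m/2 * Real.log t) (g' := fun t => F1 t - m/2 * t⁻¹)
      (by filter_upwards [h, self_mem_nhdsWithin] with t h1 ht
          exact h1.sub ((Real.hasDerivAt_log (ne_of_gt ht)).const_mul _))
      (by filter_upwards [hm.eventually (lt_mem_nhds (show m/2 < m by linarith)), self_mem_nhdsWithin] with t h1 ht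
          have ht : 0 < t := ht
          have : F1 t - m/2 * t⁻¹ = (t * F1 t - m/2) * t⁻¹ := by field_simp
          rw [this]
          have : 0 < t⁻¹ := inv_pos.2 ht
          nlinarith)
    have h1 := (Real.tendsto_log_nhdsGT_zero).eventually (eventually_lt_atBot ((c - 1 - k)/(m/2)))
    have h2 := hF.eventually (lt_mem_nhds (show c - 1 < c by linarith))
    obtain ⟨t, ht1, ht2, ht3⟩ := (hk.and (h1.and h2)).exists
    rw [lt_div_iff₀ (by linarith)] at ht2
    linarith
  apply le_antisymm (key F F1 c m h hF hm)
  have := key (fun t => - F t) (fun t => - F1 t) (-c) (-m) (h.mono fun t ht => ht.neg) hF.neg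
    (by simpa using hm.neg)
  linarith


lemma riccati_dichotomy {f f1 : ℝ → ℝ} (h : ∀ᶠ t in 𝓝[>] (0:ℝ), HasDerivAt f (f1 t) t) {k : ℝ}
    (hk : 0 < k) (hO : (fun t => t * f1 t + f t ^ 2 / 4) =O[𝓝[>] 0] fun t : ℝ => t ^ k)
    (hf : Tendsto f (𝓝[>] 0) (𝓝 0)) :
    (f =O[𝓝[>] 0] fun t : ℝ => t ^ k) ∨
      Tendsto (fun t => f t * Real.log t) (𝓝[>] 0) (𝓝 4) := by
  obtain ⟨C, hC0, hC⟩ := hO.exists_pos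
  have hC := hC.bound
  have hb : ∀ᶠ t in 𝓝[>] (0:ℝ), 0 < t ∧ |t * f1 t + f t ^ 2 / 4| ≤ C * t ^ k := by
    filter_upwards [hC, self_mem_nhdsWithin] with t h1 ht
    have ht : 0 < t := ht
    rw [Real.norm_eq_abs, Real.norm_eq_abs, abs_of_nonneg (rpow_nonneg ht.le _)] at h1
    exact ⟨ht, h1⟩
  have hup : ∀ᶠ t in 𝓝[>] (0:ℝ), f t ≤ C / k * t ^ k := by
    have := mono_ge_lim (g := fun t => C / k * t ^ k - f t)
      (g' := fun t => C / k * (k * t ^ (k-1)) - f1 t) (l := 0)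
      (by filter_upwards [h, rpow_deriv_ev k] with t h1 h2 using (h2.const_mul _).sub h1)
      (by
        filter_upwards [hb] with t ⟨ht, h1⟩
        rw [← mul_assoc, div_mul_cancel₀ _ hk.ne', Real.rpow_sub_one ht.ne']
        have h2 := (abs_le.1 h1).2
        have : f1 t ≤ C * (t ^ k / t) := by
          rw [← mul_div_assoc, le_div_iff₀ ht]
          nlinarith [sq_nonneg (f t)]
        linarith)
      (by simpa using ((rpow_tend k hk).const_mul (C/k)).sub hf)
    filter_upwards [this] with t ht
    linarith
  set A := C / k with hA
  have hApos : 0 < A := div_pos hC0 hk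
  set b := k / 4 with hbd
  have hbpos : 0 < b := by positivity
  have hkb : 0 < k - b := by rw [hbd]; linarith
  set D := (C + 2 * b * A) / (k - b) with hD
  have hDpos : 0 < D := by positivity
  obtain ⟨d, hd, hmono⟩ := mono_ev (g := fun t => D * t ^ (k - b) + t ^ (-b) * f t)
      (g' := fun t => D * ((k - b) * t ^ (k - b - 1)) + ((-b) * t ^ (-b - 1) * f t + t ^ (-b) * f1 t))
      (by filter_upwards [h, rpow_deriv_ev (k-b), rpow_deriv_ev (-b)] with t h1 h2 h3
            using (h2.const_mul _).add (h3.mul h1))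
      (by
        filter_upwards [hb, hup, hf.eventually (lt_mem_nhds (show -(4*b) < 0 by linarith)),
          hf.eventually (gt_mem_nhds (show 0 < 4*b by linarith))] with t ⟨ht, h1⟩ h2 h3 h4
        have h5 := (abs_le.1 h1).1
        have e1 : t ^ (k - b - 1) = t ^ k * t ^ (-b-1) := by
          rw [← Real.rpow_add ht]; congr 1; ring
        have e2 : t ^ (-b) = t * t ^ (-b-1) := by
          rw [Real.rpow_sub_one ht.ne']; field_simp
        have e3 : D * (k - b) = C + 2 * b * A := by rw [hD]; field_simp
        have e4 : D * ((k - b) * t ^ (k - b - 1)) + ((-b) * t ^ (-b - 1) * f t + t ^ (-b) * f1 t)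
          = t ^ (-b-1) * ((C + 2 * b * A) * t ^ k - b * f t + t * f1 t) := by
          rw [← mul_assoc, e3, e1, e2]; ring
        rw [e4]
        refine mul_nonneg (rpow_nonneg ht.le _) ?_
        have htk : 0 ≤ t ^ k := rpow_nonneg ht.le _
        rcases le_total (f t) 0 with hneg | hpos
        · have : 0 ≤ 2 * b * A * t ^ k := by positivity
          nlinarith
        · have : b * f t ≤ b * (A * t ^ k) := by gcongr
          nlinarith)
  by_cases hcase : ∀ᶠ t in 𝓝[>] (0:ℝ), 0 ≤ D * t ^ (k - b) + t ^ (-b) * f t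
  · left
    refine Asymptotics.IsBigO.of_bound (A + D) ?_
    filter_upwards [hcase, hup, self_mem_nhdsWithin] with t h1 h2 ht
    have ht : 0 < t := ht
    have htk : 0 ≤ t ^ k := rpow_nonneg ht.le _
    rw [Real.norm_eq_abs, Real.norm_eq_abs, abs_of_nonneg htk, abs_le]
    have e1 : t ^ (k - b) = t ^ k * t ^ (-b) := by
      rw [← Real.rpow_add ht]; congr 1
    rw [e1] at h1
    have hp : 0 < t ^ (-b) := rpow_pos_of_pos ht _
    have h3 : 0 ≤ t ^ (-b) * (D * t ^ k + f t) := by linarith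
    have h4 := nonneg_of_mul_nonneg_right h3 hp
    constructor <;> nlinarith
  · right
    have hfr : ∃ᶠ t in 𝓝[>] (0:ℝ), D * t ^ (k - b) + t ^ (-b) * f t < 0 := by
      rw [Filter.not_eventually] at hcase
      exact hcase.mono fun t ht => not_le.1 ht
    obtain ⟨t0, ht0, ht0d⟩ := (hfr.and_eventually (Ioo_mem_nhdsGT hd)).exists
    set c := -(D * t0 ^ (k - b) + t0 ^ (-b) * f t0) with hc
    have hcpos : 0 < c := by linarith
    have hlow : ∀ᶠ t in 𝓝[>] (0:ℝ), 0 < t ∧ f t ≤ - (c * t ^ b) := by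
      filter_upwards [Ioo_mem_nhdsGT ht0d.1] with t ht
      refine ⟨ht.1, ?_⟩
      have h1 := hmono ⟨ht.1, ht.2.trans ht0d.2⟩ ht0d ht.2.le
      simp only at h1
      have h2 : 0 ≤ D * t ^ (k-b) := mul_nonneg hDpos.le (rpow_nonneg ht.1.le _)
      have h3 : t ^ (-b) * f t ≤ -c := by linarith
      rw [Real.rpow_neg ht.1.le, inv_mul_le_iff₀ (rpow_pos_of_pos ht.1 _)] at h3
      linarith
    obtain ⟨l, hl, -⟩ := int2pow (g := fun t => -(f t)⁻¹ + Real.log t / 4)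
      (g' := fun t => -(-f1 t / f t ^ 2) + t⁻¹ / 4)
      (by
        filter_upwards [h, hlow] with t h1 ⟨ht, h2⟩
        have hpos := mul_pos hcpos (rpow_pos_of_pos ht b)
        exact (h1.inv (by linarith)).neg.add ((Real.hasDerivAt_log ht.ne').div_const 4))
      (b := k / 2) (by positivity)
      (by
        refine Asymptotics.IsBigO.of_bound (C / c ^ 2) ?_
        filter_upwards [hb, hlow] with t ⟨ht, h1⟩ ⟨_, h2⟩
        have hpb := rpow_pos_of_pos ht b
        have hpos := mul_pos hcpos hpb
        have hfne : f t ≠ 0 := by linarith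
        have e1 : -(-f1 t / f t ^ 2) + t⁻¹ / 4 = (t * f1 t + f t ^ 2 / 4) / (t * f t ^ 2) := by
          field_simp
          try ring
        rw [e1, Real.norm_eq_abs, Real.norm_eq_abs, abs_of_nonneg (rpow_nonneg ht.le _), abs_div,
          abs_of_pos (a := t * f t ^ 2) (by positivity), div_le_iff₀ (by positivity)]
        refine h1.trans ?_
        have e2 : t ^ k = t ^ (k/2 - 1) * t * (t ^ b) ^ 2 := by
          rw [← Real.rpow_natCast, ← Real.rpow_mul ht.le, ← Real.rpow_add_one ht.ne', ← Real.rpow_add ht]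
          congr 1; rw [hbd]; push_cast; ring
        have h3 : (c * t ^ b) ^ 2 ≤ f t ^ 2 := by nlinarith
        have e3 : C / c ^ 2 * t ^ (k / 2 - 1) * (t * f t ^ 2) = (C / c^2 * (t ^ (k/2 - 1) * t)) * f t ^ 2 := by ring
        rw [e3]
        have h4 : 0 ≤ C / c^2 * (t ^ (k/2 - 1) * t) := by
          have := rpow_nonneg ht.le (k/2-1)
          positivity
        refine le_trans (le_of_eq ?_) (mul_le_mul_of_nonneg_left h3 h4)
        rw [e2]; field_simp)
    have hlog := Real.tendsto_log_nhdsGT_zero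
    have hinv : Tendsto (fun t : ℝ => (Real.log t)⁻¹) (𝓝[>] 0) (𝓝 0) := hlog.inv_tendsto_atBot
    have h1 := hl.mul hinv
    rw [mul_zero] at h1
    have h2 : Tendsto (fun t => (f t * Real.log t)⁻¹) (𝓝[>] 0) (𝓝 (4:ℝ)⁻¹) := by
      have h3 := (tendsto_const_nhds (x := (4:ℝ)⁻¹)).sub h1
      rw [sub_zero] at h3
      refine h3.congr' ?_
      filter_upwards [hlog.eventually (eventually_lt_atBot 0)] with t ht
      have : Real.log t ≠ 0 := by linarith
      rw [mul_inv, add_mul]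
      have : Real.log t / 4 * (Real.log t)⁻¹ = 4⁻¹ := by field_simp
      rw [this]; ring
    have h3 := h2.inv₀ (by norm_num)
    simpa using h3


lemma G1_bound {F G1 : ℝ → ℝ}
    (hG1 : ∀ᶠ t in 𝓝[>] (0:ℝ), HasDerivAt G1 (-(F t * G1 t) / (t * (2 - t))) t)
    (hF2 : Tendsto F (𝓝[>] 0) (𝓝 2)) {ε : ℝ} (hε : 0 < ε) :
    G1 =O[𝓝[>] 0] fun t : ℝ => t ^ (-ε - 1) := by
  have hid : Tendsto (fun t : ℝ => t) (𝓝[>] 0) (𝓝 0) := tendsto_id.mono_left nhdsWithin_le_nhds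
  have hlim : Tendsto (fun t => 2 + 2 * ε - 2 * F t / (2 - t)) (𝓝[>] 0) (𝓝 (2 * ε)) := by
    have := (tendsto_const_nhds (x := 2 + 2 * ε)).sub
      ((hF2.const_mul 2).div ((tendsto_const_nhds (x := (2:ℝ))).sub hid) (by norm_num))
    have e : 2 + 2 * ε - 2 * 2 / (2 - 0) = 2 * ε := by ring
    rw [e] at this
    exact this
  obtain ⟨c, hc⟩ := mono_le (g := fun t => t ^ (2 + 2 * ε) * G1 t ^ 2)
    (g' := fun t => (2 + 2 * ε) * t ^ (2 + 2 * ε - 1) * G1 t ^ 2 +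
      t ^ (2 + 2 * ε) * (((2:ℕ):ℝ) * G1 t ^ (2 - 1) * (-(F t * G1 t) / (t * (2 - t)))))
    (by filter_upwards [hG1, rpow_deriv_ev (2 + 2 * ε)] with t h1 h2
        exact h2.mul (h1.pow 2))
    (by
      filter_upwards [hlim.eventually (lt_mem_nhds (show 0 < 2 * ε by positivity)),
        Ioo_mem_nhdsGT (show (0:ℝ) < 1 by norm_num)] with t h1 ht
      have ht0 := ht.1
      have h2t : 0 < 2 - t := by linarith [ht.2]
      have e : t ^ (2 + 2 * ε) = t * t ^ (2 + 2 * ε - 1) := by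
        rw [Real.rpow_sub_one ht0.ne']; field_simp
      have : (2 + 2 * ε) * t ^ (2 + 2 * ε - 1) * G1 t ^ 2 +
        t ^ (2 + 2 * ε) * (((2:ℕ):ℝ) * G1 t ^ (2 - 1) * (-(F t * G1 t) / (t * (2 - t))))
        = t ^ (2 + 2 * ε - 1) * G1 t ^ 2 * (2 + 2 * ε - 2 * F t / (2 - t)) := by
        rw [e]; generalize t ^ (2 + 2 * ε - 1) = X
        push_cast
        field_simp
        try ring
      rw [this]
      have := rpow_nonneg ht0.le (2 + 2 * ε - 1)
      positivity)
  have : (fun t => G1 t ^ 2) =O[𝓝[>] 0] fun t : ℝ => (t ^ (-ε - 1)) ^ 2 := by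
    refine Asymptotics.IsBigO.of_bound c ?_
    filter_upwards [hc, self_mem_nhdsWithin] with t h1 ht
    have ht : 0 < t := ht
    rw [Real.norm_eq_abs, Real.norm_eq_abs, abs_of_nonneg (sq_nonneg _), abs_of_nonneg (sq_nonneg _)]
    have e : (t ^ (-ε - 1)) ^ 2 = (t ^ (2 + 2 * ε))⁻¹ := by
      rw [← Real.rpow_natCast, ← Real.rpow_mul ht.le, ← Real.rpow_neg ht.le]
      congr 1; push_cast; ring
    rw [e, ← div_eq_mul_inv, le_div_iff₀ (rpow_pos_of_pos ht _)]
    linarith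
  exact Asymptotics.IsBigO.of_pow (n := 2) (by norm_num) this

lemma F_est {F H H1 G G1 K : ℝ → ℝ}
    (hF : ∀ᶠ t in 𝓝[>] (0:ℝ), HasDerivAt F (H t) t)
    (hH : ∀ᶠ t in 𝓝[>] (0:ℝ), HasDerivAt H (H1 t) t)
    (hM : ∀ᶠ t in 𝓝[>] (0:ℝ), HasDerivAt (fun t => t * (2 - t) * H1 t + F t * H t + 2 * F t) (-K t) t)
    (hK : ∀ᶠ t in 𝓝[>] (0:ℝ), HasDerivAt K (2 * G t * G1 t / (t * (2 - t))) t)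
    (hG : ∀ᶠ t in 𝓝[>] (0:ℝ), HasDerivAt G (G1 t) t)
    (hG1 : ∀ᶠ t in 𝓝[>] (0:ℝ), HasDerivAt G1 (-(F t * G1 t) / (t * (2 - t))) t)
    (hF2 : Tendsto F (𝓝[>] 0) (𝓝 2)) {ε : ℝ} (hε : 0 < ε) (hε2 : ε < 1/2) :
    (fun t => t * H t + (F t - 2) ^ 2 / 4) =O[𝓝[>] 0] fun t : ℝ => t ^ (1 - 2 * ε) := by
  have hid : Tendsto (fun t : ℝ => t) (𝓝[>] 0) (𝓝 0) := tendsto_id.mono_left nhdsWithin_le_nhds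
  have b1 := G1_bound hG1 hF2 hε
  have b2 := int1pow hG hε b1
  have b3 : (fun t => 2 * G t * G1 t / (t * (2 - t))) =O[𝓝[>] 0] fun t : ℝ => t ^ (-(1 + 2 * ε) - 1) := by
    have h1 := rpow_mul_isBigO (c := -2 * ε - 1) b2 b1 (by linarith)
    have h2 := rpow_mul_isBigO (c := -(1 + 2 * ε) - 1) h1 inv_isBigO (by linarith)
    refine (h2.const_mul_left 2).congr_left ?_
    intro t; ring
  have b4 := int1pow hK (by linarith) b3
  have b5 := int1pow (a := 2 * ε) hM (by linarith) (b4.neg_left.congr_right (fun t => by congr 1; ring))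
  obtain ⟨l, hl, hlO⟩ := int2pow (b := 1 - 2 * ε)
    (g := fun t => t * (2 - t) * H t + 2 * (t - 1) * F t + F t ^ 2 / 2)
    (g' := fun t => t * (2 - t) * H1 t + F t * H t + 2 * F t)
    (by
      filter_upwards [hF, hH] with t h1 h2
      have h3 := (((hasDerivAt_id t).mul ((hasDerivAt_id t).const_sub 2)).mul h2).add
        (((((hasDerivAt_id t).sub_const 1).const_mul 2).mul h1)) |>.add ((h1.pow 2).div_const 2)
      refine h3.congr_deriv ?_
      simp
      ring)
    (by linarith) (b5.congr_right (fun t => by congr 1; ring))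
  have h2t : Tendsto (fun t : ℝ => 2 - t) (𝓝[>] 0) (𝓝 2) := by simpa using hid.const_sub 2
  have hl2 : l = -2 := by
    have h1 : Tendsto (fun t => t * H t) (𝓝[>] 0) (𝓝 ((l - 2 * (0 - 1) * 2 - 2 ^ 2 / 2) / 2)) := by
      have := ((hl.sub (((hid.sub_const 1).const_mul 2).mul hF2)).sub ((hF2.pow 2).div_const 2)).div h2t (by norm_num)
      refine this.congr' ?_
      filter_upwards [Ioo_mem_nhdsGT (show (0:ℝ) < 1 by norm_num)] with t ht
      have : 2 - t ≠ 0 := by linarith [ht.2]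
      simp only [Pi.div_apply]
      field_simp
      ring
    have := tlim_zero hF hF2 h1
    linarith
  subst hl2
  have hinv : (fun t : ℝ => (2 - t)⁻¹) =O[𝓝[>] 0] fun t : ℝ => (1:ℝ) :=
    (h2t.inv₀ (by norm_num)).isBigO_one ℝ
  have ht1 : (fun t : ℝ => t) =O[𝓝[>] 0] fun t : ℝ => t ^ (1 - 2 * ε) := by
    have := rpow_isBigO (a := 1) (b := 1 - 2 * ε) (by linarith)
    simpa using this
  have c1 : (fun t => 2 * F t + (F t - 2) ^ 2 / 4) =O[𝓝[>] 0] fun t : ℝ => (1:ℝ) :=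
    ((hF2.const_mul 2).add (((hF2.sub_const 2).pow 2).div_const 4)).isBigO_one ℝ
  have c2 := (hlO.sub (by simpa using ht1.mul c1)).mul hinv
  simp only [mul_one] at c2
  refine c2.congr' ?_ EventuallyEq.rfl
  filter_upwards [Ioo_mem_nhdsGT (show (0:ℝ) < 1 by norm_num)] with t ht
  have : 2 - t ≠ 0 := by linarith [ht.2]
  field_simp
  ring


lemma G_case0 {F G G1 : ℝ → ℝ}
    (hG : ∀ᶠ t in 𝓝[>] (0:ℝ), HasDerivAt G (G1 t) t)
    (hG1 : ∀ᶠ t in 𝓝[>] (0:ℝ), HasDerivAt G1 (-(F t * G1 t) / (t * (2 - t))) t)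
    (hF2 : Tendsto F (𝓝[>] 0) (𝓝 2))
    (hf : (fun t => F t - 2) =O[𝓝[>] 0] fun t : ℝ => t ^ (3/4:ℝ)) :
    (∃ c : ℝ, ∀ᶠ t in 𝓝[>] (0:ℝ), G t = c) ∨
      (∃ L : ℝ, L ≠ 0 ∧ Tendsto (fun t => G t / Real.log t) (𝓝[>] 0) (𝓝 L)) := by
  have hid : Tendsto (fun t : ℝ => t) (𝓝[>] 0) (𝓝 0) := tendsto_id.mono_left nhdsWithin_le_nhds
  have h2t : Tendsto (fun t : ℝ => 2 - t) (𝓝[>] 0) (𝓝 2) := by simpa using hid.const_sub 2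
  have hinv : (fun t : ℝ => (2 - t)⁻¹) =O[𝓝[>] 0] fun t : ℝ => (1:ℝ) :=
    (h2t.inv₀ (by norm_num)).isBigO_one ℝ
  have ht1 : (fun t : ℝ => t) =O[𝓝[>] 0] fun t : ℝ => t ^ (3/4:ℝ) := by
    have := rpow_isBigO (a := 1) (b := 3/4) (by norm_num)
    simpa using this
  have b1 := G1_bound hG1 hF2 (ε := 1/4) (by norm_num)
  have hΓ : ∀ᶠ t in 𝓝[>] (0:ℝ), HasDerivAt (fun t => t * G1 t)
      (-((t + (F t - 2)) * G1 t * (2 - t)⁻¹)) t := by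
    filter_upwards [hG1, Ioo_mem_nhdsGT (show (0:ℝ) < 1 by norm_num)] with t h1 ht
    have h2 := (hasDerivAt_id t).mul h1
    refine h2.congr_deriv ?_
    have : 2 - t ≠ 0 := by linarith [ht.2]
    have := ht.1.ne'
    simp only [id]
    field_simp
    ring
  obtain ⟨c, hc, hcO⟩ := int2pow (b := 1/2) hΓ (by norm_num) (by
    have := (rpow_mul_isBigO (c := 1/2 - 1) (ht1.add hf) b1 (by norm_num)).mul hinv
    simpa using this.neg_left)
  by_cases hc0 : c = 0
  · left
    subst hc0
    have hz : ∀ᶠ t in 𝓝[>] (0:ℝ), (0:ℝ) ≤ -(t ^ (-(1/2):ℝ) * (t * G1 t) ^ 2) := by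
      refine mono_ge_lim (g := fun t => -(t ^ (-(1/2):ℝ) * (t * G1 t) ^ 2))
        (g' := fun t => -((-(1/2)) * t ^ (-(1/2) - 1 : ℝ) * (t * G1 t) ^ 2 + t ^ (-(1/2):ℝ) *
          (((2:ℕ):ℝ) * (t * G1 t) ^ (2 - 1) * (-((t + (F t - 2)) * G1 t * (2 - t)⁻¹))))) ?_ ?_ ?_
      · filter_upwards [hΓ, rpow_deriv_ev (-(1/2))] with t h1 h2
        exact (h2.mul (h1.pow 2)).neg
      · have hlim : Tendsto (fun t => 1/2 + 2 * (t + (F t - 2)) * (2 - t)⁻¹) (𝓝[>] 0) (𝓝 (1/2 + 2 * (0 + (2 - 2)) * 2⁻¹)) :=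
          (((hid.add (hF2.sub_const 2)).const_mul 2).mul (h2t.inv₀ (by norm_num))).const_add _
        filter_upwards [hlim.eventually (lt_mem_nhds (show (0:ℝ) < _ by norm_num)),
          Ioo_mem_nhdsGT (show (0:ℝ) < 1 by norm_num)] with t h1 ht
        have ht0 := ht.1
        have e : t ^ (-(1/2):ℝ) = t * t ^ (-(1/2) - 1 : ℝ) := by
          rw [Real.rpow_sub_one ht0.ne']; field_simp
        rw [e]
        have hX := rpow_nonneg ht0.le (-(1/2) - 1 : ℝ)
        generalize t ^ (-(1/2) - 1 : ℝ) = X at *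
        have : -((-(1/2)) * X * (t * G1 t) ^ 2 + t * X *
          (((2:ℕ):ℝ) * (t * G1 t) ^ (2 - 1) * (-((t + (F t - 2)) * G1 t * (2 - t)⁻¹))))
          = X * (t * G1 t) ^ 2 * (1/2 + 2 * (t + (F t - 2)) * (2 - t)⁻¹) := by
          push_cast; ring
        rw [this]
        positivity
      · have h1 : (fun t : ℝ => t * G1 t) =O[𝓝[>] 0] fun t : ℝ => t ^ (1/2:ℝ) := by simpa using hcO
        have h2 := rpow_mul_isBigO (c := 1/2) (Asymptotics.isBigO_refl (fun t : ℝ => t ^ (-(1/2):ℝ)) (𝓝[>] 0))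
          (rpow_mul_isBigO (c := 1) h1 h1 (by norm_num)) (by norm_num)
        have h3 := (h2.trans_tendsto (rpow_tend _ (by norm_num))).neg
        simpa [pow_two] using h3
    have hG0 : ∀ᶠ t in 𝓝[>] (0:ℝ), G1 t = 0 := by
      filter_upwards [hz, self_mem_nhdsWithin] with t h1 ht
      have ht : 0 < t := ht
      have h2 := rpow_pos_of_pos ht (-(1/2))
      by_contra hne
      have : 0 < t ^ (-(1/2):ℝ) * (t * G1 t) ^ 2 := by positivity
      linarith
    obtain ⟨l, -, hl⟩ := int2 (Φ := fun _ => 0) (φ := fun _ => 0) hG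
      (Eventually.of_forall fun t => hasDerivAt_const t 0)
      (hG0.mono fun t ht => by simp [ht]) tendsto_const_nhds
    refine ⟨l, hl.mono fun t ht => ?_⟩
    have := abs_nonpos_iff.1 ht
    linarith
  · right
    refine ⟨c, hc0, ?_⟩
    obtain ⟨l, hl, -⟩ := int2pow (b := 1/2) (g := fun t => G t - c * Real.log t)
      (g' := fun t => G1 t - c * t⁻¹)
      (by filter_upwards [hG, self_mem_nhdsWithin] with t h1 ht
          exact h1.sub ((Real.hasDerivAt_log (ne_of_gt ht)).const_mul _))
      (by norm_num)
      (by
        have := rpow_mul_isBigO (c := 1/2 - 1) hcO (Asymptotics.isBigO_refl (fun t : ℝ => t ^ (-1:ℝ)) (𝓝[>] 0)) (by norm_num)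
        refine this.congr' ?_ EventuallyEq.rfl
        filter_upwards [self_mem_nhdsWithin] with t ht
        have ht : 0 < t := ht
        rw [Real.rpow_neg_one]
        field_simp)
    have hlog := Real.tendsto_log_nhdsGT_zero
    have hinv : Tendsto (fun t : ℝ => (Real.log t)⁻¹) (𝓝[>] 0) (𝓝 0) := hlog.inv_tendsto_atBot
    have h1 := (hl.mul hinv).add_const c
    rw [mul_zero, zero_add] at h1
    refine h1.congr' ?_
    filter_upwards [hlog.eventually (eventually_lt_atBot 0)] with t ht
    have : Real.log t ≠ 0 := by linarith
    field_simp
    ring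

lemma G_case2 {F G G1 : ℝ → ℝ}
    (hG : ∀ᶠ t in 𝓝[>] (0:ℝ), HasDerivAt G (G1 t) t)
    (hG1 : ∀ᶠ t in 𝓝[>] (0:ℝ), HasDerivAt G1 (-(F t * G1 t) / (t * (2 - t))) t)
    (hf : Tendsto (fun t => (F t - 2) * Real.log t) (𝓝[>] 0) (𝓝 4)) :
    ∃ L : ℝ, Tendsto G (𝓝[>] 0) (𝓝 L) := by
  have hid : Tendsto (fun t : ℝ => t) (𝓝[>] 0) (𝓝 0) := tendsto_id.mono_left nhdsWithin_le_nhds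
  have h2t : Tendsto (fun t : ℝ => 2 - t) (𝓝[>] 0) (𝓝 2) := by simpa using hid.const_sub 2
  have hlog := Real.tendsto_log_nhdsGT_zero
  have htlog : Tendsto (fun t : ℝ => Real.log t * t) (𝓝[>] 0) (𝓝 0) := by
    simpa using tendsto_log_mul_rpow_nhdsGT_zero (r := 1) (by norm_num)
  have hΓ : ∀ᶠ t in 𝓝[>] (0:ℝ), HasDerivAt (fun t => t * G1 t)
      (-((t + (F t - 2)) * G1 t * (2 - t)⁻¹)) t := by
    filter_upwards [hG1, Ioo_mem_nhdsGT (show (0:ℝ) < 1 by norm_num)] with t h1 ht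
    have h2 := (hasDerivAt_id t).mul h1
    refine h2.congr_deriv ?_
    have : 2 - t ≠ 0 := by linarith [ht.2]
    have := ht.1.ne'
    simp only [id]
    field_simp
    ring
  obtain ⟨c, hc⟩ := mono_le (g := fun t => (t * G1 t) ^ 2 * (-Real.log t) ^ 3)
    (g' := fun t => (((2:ℕ):ℝ) * (t * G1 t) ^ (2 - 1) * (-((t + (F t - 2)) * G1 t * (2 - t)⁻¹))) * (-Real.log t) ^ 3
      + (t * G1 t) ^ 2 * (((3:ℕ):ℝ) * (-Real.log t) ^ (3 - 1) * (-t⁻¹)))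
    (by
      filter_upwards [hΓ, self_mem_nhdsWithin] with t h1 ht
      exact (h1.pow 2).mul ((Real.hasDerivAt_log (ne_of_gt ht)).neg.pow 3))
    (by
      have hlim : Tendsto (fun t => 2 * (Real.log t * t + (F t - 2) * Real.log t) * (2 - t)⁻¹ - 3) (𝓝[>] 0)
          (𝓝 (2 * (0 + 4) * 2⁻¹ - 3)) :=
        (((htlog.add hf).const_mul 2).mul (h2t.inv₀ (by norm_num))).sub_const _
      filter_upwards [hlim.eventually (lt_mem_nhds (show (0:ℝ) < _ by norm_num)),
          Ioo_mem_nhdsGT (show (0:ℝ) < 1 by norm_num)] with t h1 ht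
      have ht0 := ht.1
      have : (((2:ℕ):ℝ) * (t * G1 t) ^ (2 - 1) * (-((t + (F t - 2)) * G1 t * (2 - t)⁻¹))) * (-Real.log t) ^ 3
        + (t * G1 t) ^ 2 * (((3:ℕ):ℝ) * (-Real.log t) ^ (3 - 1) * (-t⁻¹))
        = t * (G1 t) ^ 2 * (Real.log t) ^ 2 * (2 * (Real.log t * t + (F t - 2) * Real.log t) * (2 - t)⁻¹ - 3) := by
        generalize (2 - t)⁻¹ = Y
        push_cast
        field_simp
        ring
      rw [this]
      positivity)
  set q := Real.sqrt (max c 0) with hq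
  obtain ⟨L, hL, -⟩ := int2 (g := G) (Φ := fun t => 2 * q * (-Real.log t) ^ (-(1/2):ℝ))
    (φ := fun t => 2 * q * ((-t⁻¹) * (-(1/2)) * (-Real.log t) ^ (-(1/2) - 1:ℝ))) hG
    (by
      filter_upwards [self_mem_nhdsWithin, hlog.eventually (eventually_lt_atBot 0)] with t ht hl
      have h1 := (Real.hasDerivAt_log (ne_of_gt ht)).neg
      exact (h1.rpow_const (Or.inl (by simp only [Pi.neg_apply]; linarith))).const_mul _)
    (by
      filter_upwards [hc, self_mem_nhdsWithin, hlog.eventually (eventually_lt_atBot 0)] with t h1 ht hl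
      have ht : 0 < t := ht
      have hl' : 0 < -Real.log t := by linarith
      set l := -Real.log t with hldef
      have hY := rpow_nonneg hl'.le (-(1/2) - 1:ℝ)
      have e1 : (l ^ (-(1/2) - 1:ℝ)) ^ 2 = (l ^ 3)⁻¹ := by
        rw [← Real.rpow_natCast, ← Real.rpow_mul hl'.le, ← Real.rpow_natCast, ← Real.rpow_neg hl'.le]
        congr 1; push_cast; norm_num
      have h2 : (t * G1 t) ^ 2 ≤ (q * l ^ (-(1/2) - 1:ℝ)) ^ 2 := by
        rw [mul_pow q, e1, hq, Real.sq_sqrt (le_max_right _ _), ← div_eq_mul_inv, le_div_iff₀ (by positivity)]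
        exact h1.trans (le_max_left _ _)
      have hq0 : 0 ≤ q := Real.sqrt_nonneg _
      have h3 := abs_le_of_sq_le_sq h2 (by positivity)
      have h4 : |t * G1 t| ≤ q * l ^ (-(1/2) - 1:ℝ) := h3
      rw [abs_mul, abs_of_pos ht] at h4
      have e2 : 2 * q * ((-t⁻¹) * (-(1/2)) * l ^ (-(1/2) - 1:ℝ)) = q * l ^ (-(1/2) - 1:ℝ) / t := by
        field_simp
      rw [e2, le_div_iff₀ ht]
      linarith)
    (by
      have h1 : Tendsto (fun t : ℝ => -Real.log t) (𝓝[>] 0) atTop := tendsto_neg_atBot_atTop.comp hlog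
      have := ((tendsto_rpow_neg_atTop (y := 1/2) (by norm_num)).comp h1).const_mul (2 * q)
      simpa using this)
  exact ⟨L, hL⟩

lemma ode_analysis {F H H1 G G1 K : ℝ → ℝ}
    (hF : ∀ᶠ t in 𝓝[>] (0:ℝ), HasDerivAt F (H t) t)
    (hH : ∀ᶠ t in 𝓝[>] (0:ℝ), HasDerivAt H (H1 t) t)
    (hM : ∀ᶠ t in 𝓝[>] (0:ℝ), HasDerivAt (fun t => t * (2 - t) * H1 t + F t * H t + 2 * F t) (-K t) t)
    (hK : ∀ᶠ t in 𝓝[>] (0:ℝ), HasDerivAt K (2 * G t * G1 t / (t * (2 - t))) t)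
    (hG : ∀ᶠ t in 𝓝[>] (0:ℝ), HasDerivAt G (G1 t) t)
    (hG1 : ∀ᶠ t in 𝓝[>] (0:ℝ), HasDerivAt G1 (-(F t * G1 t) / (t * (2 - t))) t)
    (hF2 : Tendsto F (𝓝[>] 0) (𝓝 2)) :
    (Tendsto (fun t => (F t - 2) * Real.log t) (𝓝[>] 0) (𝓝 0) ∧
      (∀ ε > (0:ℝ), Tendsto (fun t => t ^ ε * H t) (𝓝[>] 0) (𝓝 0)) ∧
      ((∃ c : ℝ, ∀ᶠ t in 𝓝[>] (0:ℝ), G t = c) ∨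
      (∃ L : ℝ, L ≠ 0 ∧ Tendsto (fun t => G t / Real.log t) (𝓝[>] 0) (𝓝 L)))) ∨
    (Tendsto (fun t => (F t - 2) * Real.log t) (𝓝[>] 0) (𝓝 4) ∧
      Tendsto (fun t => t * (Real.log t) ^ 2 * H t) (𝓝[>] 0) (𝓝 (-4)) ∧
      ∃ L : ℝ, Tendsto G (𝓝[>] 0) (𝓝 L)) := by
  have hf0 : Tendsto (fun t => F t - 2) (𝓝[>] 0) (𝓝 0) := by simpa using hF2.sub_const 2
  have est : ∀ {ε : ℝ}, 0 < ε → ε < 1/2 → _ := fun {ε} h1 h2 => F_est hF hH hM hK hG hG1 hF2 (ε := ε) h1 h2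
  have dich : ∀ {ε : ℝ}, 0 < ε → ε < 1/2 → _ := fun {ε} h1 h2 =>
    riccati_dichotomy (f := fun t => F t - 2) (f1 := H) (k := 1 - 2 * ε)
      (hF.mono fun t ht => ht.sub_const 2) (by linarith) (est h1 h2) hf0
  have hlogr : ∀ r : ℝ, 0 < r → Tendsto (fun t : ℝ => Real.log t * t ^ r) (𝓝[>] 0) (𝓝 0) :=
    fun r hr => tendsto_log_mul_rpow_nhdsGT_zero hr
  rcases dich (ε := 1/8) (by norm_num) (by norm_num) with h1 | h1
  · left
    have hfO : (fun t => F t - 2) =O[𝓝[>] 0] fun t : ℝ => t ^ (3/4:ℝ) := by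
      refine h1.congr_right fun t => ?_
      norm_num
    have hf4 : Tendsto (fun t => (F t - 2) * Real.log t) (𝓝[>] 0) (𝓝 0) := by
      have := (hfO.mul (Asymptotics.isBigO_refl Real.log (𝓝[>] 0))).trans_tendsto
        (by simpa [mul_comm] using hlogr (3/4) (by norm_num))
      exact this
    refine ⟨hf4, ?_, G_case0 hG hG1 hF2 hfO⟩
    intro ε hε
    set e := min (ε/4) (1/4) with he
    have he0 : 0 < e := by positivity
    have he1 : e ≤ ε / 4 := min_le_left _ _
    have he2 : e ≤ 1/4 := min_le_right _ _
    rcases dich (ε := e) he0 (by linarith) with h2 | h2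
    · have h3 := rpow_mul_isBigO (c := 1 - 2 * e) h2 h2 (by linarith)
      have h4 : (fun t => t * H t) =O[𝓝[>] 0] fun t : ℝ => t ^ (1 - 2 * e) := by
        refine ((est he0 (by linarith)).sub (h3.const_mul_left (1/4))).congr_left fun t => ?_
        ring
      have h5 := rpow_mul_isBigO (c := ε/2) h4
        (Asymptotics.isBigO_refl (fun t : ℝ => t ^ (ε - 1)) (𝓝[>] 0)) (by linarith)
      have h6 := h5.trans_tendsto (rpow_tend _ (by positivity))
      refine h6.congr' ?_
      filter_upwards [self_mem_nhdsWithin] with t ht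
      have ht : 0 < t := ht
      rw [Real.rpow_sub_one ht.ne']
      field_simp
    · have := tendsto_nhds_unique hf4 h2
      norm_num at this
  · right
    refine ⟨h1, ?_, G_case2 hG hG1 h1⟩
    have h2 := (est (ε := 1/8) (by norm_num) (by norm_num)).mul (Asymptotics.isBigO_refl (fun t => (Real.log t)^2) (𝓝[>] 0))
    have h3 : Tendsto (fun t : ℝ => t ^ (1 - 2 * (1/8) : ℝ) * Real.log t ^ 2) (𝓝[>] 0) (𝓝 0) := by
      have := (hlogr (3/8) (by norm_num)).pow 2
      rw [zero_pow two_ne_zero] at this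
      refine this.congr' ?_
      filter_upwards [self_mem_nhdsWithin] with t ht
      have ht : 0 < t := ht
      rw [mul_pow, mul_comm, ← Real.rpow_natCast (t ^ (3/8:ℝ)), ← Real.rpow_mul ht.le]
      congr 2; norm_num
    have h4 := (h2.trans_tendsto h3).sub ((h1.pow 2).div_const 4)
    norm_num at h4
    refine h4.congr fun t => ?_
    ring


lemma pd_congr {f g : V3 → ℝ} {x : V3} (h : f =ᶠ[𝓝 x] g) (j : Fin 3) : pd j f x = pd j g x := by
  unfold pd; rw [h.fderiv_eq]

lemma pd_congr_ev {f g : V3 → ℝ} {x : V3} (h : f =ᶠ[𝓝 x] g) (j : Fin 3) :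
    (fun z => pd j f z) =ᶠ[𝓝 x] fun z => pd j g z := by
  filter_upwards [h.eventuallyEq_nhds] with z hz using pd_congr hz j

lemma lap_congr {f g : V3 → ℝ} {x : V3} (h : f =ᶠ[𝓝 x] g) : lap3 f x = lap3 g x := by
  unfold lap3
  exact Finset.sum_congr rfl fun j _ => pd_congr (pd_congr_ev h j) j

lemma pd_add {f g : V3 → ℝ} {x : V3} (hf : DifferentiableAt ℝ f x) (hg : DifferentiableAt ℝ g x)
    (j : Fin 3) : pd j (fun z => f z + g z) x = pd j f x + pd j g x := by
  unfold pd; rw [fderiv_fun_add hf hg]; rfl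

lemma pd_mul {f g : V3 → ℝ} {x : V3} (hf : DifferentiableAt ℝ f x) (hg : DifferentiableAt ℝ g x)
    (j : Fin 3) : pd j (fun z => f z * g z) x = pd j f x * g x + f x * pd j g x := by
  unfold pd; rw [fderiv_fun_mul hf hg]; simp; ring

lemma pd_comp {Φ : ℝ → ℝ} {f : V3 → ℝ} {x : V3} (hΦ : DifferentiableAt ℝ Φ (f x))
    (hf : DifferentiableAt ℝ f x)
    (j : Fin 3) : pd j (fun z => Φ (f z)) x = deriv Φ (f x) * pd j f x := by
  unfold pd
  have := (hΦ.hasDerivAt.comp_hasFDerivAt x hf.hasFDerivAt).fderiv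
  change fderiv ℝ (Φ ∘ f) x (e3 j) = _
  rw [this]; simp

lemma cd_diff {E : Type*} [NormedAddCommGroup E] [NormedSpace ℝ E] {f : E → ℝ} {x : E} (hf : ContDiffAt ℝ 2 f x) : DifferentiableAt ℝ f x :=
  hf.differentiableAt (by norm_num)

lemma cd_ev {E : Type*} [NormedAddCommGroup E] [NormedSpace ℝ E] {f : E → ℝ} {x : E} (hf : ContDiffAt ℝ 2 f x) : ∀ᶠ z in 𝓝 x, DifferentiableAt ℝ f z := by
  filter_upwards [hf.eventually (by simp)] with z hz using cd_diff hz

lemma cd_pd {f : V3 → ℝ} {x : V3} (hf : ContDiffAt ℝ 2 f x) (j : Fin 3) :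
    DifferentiableAt ℝ (fun z => pd j f z) x := by
  have h1 : ContDiffAt ℝ 1 (fderiv ℝ f) x := hf.fderiv_right (by norm_num)
  exact (h1.differentiableAt (by norm_num)).clm_apply (differentiableAt_const _)

lemma cd_deriv {f : ℝ → ℝ} {x : ℝ} (hf : ContDiffAt ℝ 2 f x) : DifferentiableAt ℝ (deriv f) x := by
  have h1 : ContDiffAt ℝ 1 (fderiv ℝ f) x := hf.fderiv_right (by norm_num)
  exact (h1.differentiableAt (by norm_num)).clm_apply (differentiableAt_const (1:ℝ))

lemma lap_add {f g : V3 → ℝ} {x : V3} (hf : ContDiffAt ℝ 2 f x) (hg : ContDiffAt ℝ 2 g x) :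
    lap3 (fun z => f z + g z) x = lap3 f x + lap3 g x := by
  unfold lap3
  rw [← Finset.sum_add_distrib]
  refine Finset.sum_congr rfl fun j _ => ?_
  rw [← pd_add (cd_pd hf j) (cd_pd hg j)]
  apply pd_congr
  filter_upwards [cd_ev hf, cd_ev hg] with z h1 h2 using pd_add h1 h2 j

lemma lap_mul {f g : V3 → ℝ} {x : V3} (hf : ContDiffAt ℝ 2 f x) (hg : ContDiffAt ℝ 2 g x) :
    lap3 (fun z => f z * g z) x = lap3 f x * g x + 2 * (∑ j, pd j f x * pd j g x) + f x * lap3 g x := by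
  have : ∀ j, pd j (fun z => pd j (fun z => f z * g z) z) x = pd j (fun z => pd j f z) x * g x
      + 2 * (pd j f x * pd j g x) + f x * pd j (fun z => pd j g z) x := by
    intro j
    have e : (fun z => pd j (fun z => f z * g z) z) =ᶠ[𝓝 x] fun z => pd j f z * g z + f z * pd j g z := by
      filter_upwards [cd_ev hf, cd_ev hg] with z h1 h2 using pd_mul h1 h2 j
    rw [pd_congr e, pd_add ((cd_pd hf j).fun_mul (cd_diff hg)) ((cd_diff hf).fun_mul (cd_pd hg j)),
      pd_mul (cd_pd hf j) (cd_diff hg), pd_mul (cd_diff hf) (cd_pd hg j)]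
    ring
  unfold lap3
  simp only [this, Fin.sum_univ_three]
  ring

lemma lap_comp {Φ : ℝ → ℝ} {f : V3 → ℝ} {x : V3} (hΦ : ContDiffAt ℝ 2 Φ (f x)) (hf : ContDiffAt ℝ 2 f x) :
    lap3 (fun z => Φ (f z)) x = deriv Φ (f x) * lap3 f x + deriv (deriv Φ) (f x) * ∑ j, (pd j f x) ^ 2 := by
  have hc := (cd_diff hf).continuousAt
  have : ∀ j, pd j (fun z => pd j (fun z => Φ (f z)) z) x = deriv Φ (f x) * pd j (fun z => pd j f z) x
      + deriv (deriv Φ) (f x) * (pd j f x) ^ 2 := by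
    intro j
    have e : (fun z => pd j (fun z => Φ (f z)) z) =ᶠ[𝓝 x] fun z => deriv Φ (f z) * pd j f z := by
      filter_upwards [cd_ev hf, hc.eventually (cd_ev hΦ)] with z h1 h2 using pd_comp h2 h1 j
    rw [pd_congr e, pd_mul (f := fun z => deriv Φ (f z)) ((cd_deriv hΦ).comp x (cd_diff hf)) (cd_pd hf j), pd_comp (cd_deriv hΦ) (cd_diff hf)]
    ring
  unfold lap3
  simp only [this, Fin.sum_univ_three]
  ring

lemma pd_coord (i j : Fin 3) (x : V3) : pd j (fun z => z i) x = if i = j then 1 else 0 := by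
  unfold pd
  have : (fun z : V3 => z i) = (EuclideanSpace.proj i : V3 →L[ℝ] ℝ) := rfl
  rw [this, ContinuousLinearMap.fderiv]
  simp [e3]

lemma cd_coord (i : Fin 3) (x : V3) : ContDiffAt ℝ 2 (fun z : V3 => z i) x :=
  (EuclideanSpace.proj i : V3 →L[ℝ] ℝ).contDiff.contDiffAt

lemma lap_coord (i : Fin 3) (x : V3) : lap3 (fun z => z i) x = 0 := by
  unfold lap3
  apply Finset.sum_eq_zero
  intro j _
  have : (fun y => pd j (fun z => z i) y) = fun _ => if i = j then (1:ℝ) else 0 := by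
    funext y; exact pd_coord i j y
  rw [this]; simp [pd]

lemma norm3_sq (x : V3) : ‖x‖ ^ 2 = x 0 ^ 2 + x 1 ^ 2 + x 2 ^ 2 := by
  rw [EuclideanSpace.real_norm_sq_eq, Fin.sum_univ_three]

lemma cd_norm {x : V3} (hx : x ≠ 0) : ContDiffAt ℝ 2 (fun z : V3 => ‖z‖) x := contDiffAt_norm ℝ hx

lemma pd_norm {x : V3} (hx : x ≠ 0) (j : Fin 3) : pd j (fun z => ‖z‖) x = x j / ‖x‖ := by
  have hn : ‖x‖ ≠ 0 := norm_ne_zero_iff.2 hx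
  have h1 := pd_mul (cd_diff (cd_norm hx)) (cd_diff (cd_norm hx)) j
  have h2 : pd j (fun z : V3 => ‖z‖ * ‖z‖) x = 2 * x j := by
    have e : (fun z : V3 => ‖z‖ * ‖z‖) = fun z => z 0 * z 0 + z 1 * z 1 + z 2 * z 2 := by
      funext z; rw [← pow_two, norm3_sq]; ring
    have hc := fun i => cd_diff (cd_coord i x)
    rw [e, pd_add (((hc 0).fun_mul (hc 0)).fun_add ((hc 1).fun_mul (hc 1))) ((hc 2).fun_mul (hc 2)),
      pd_add ((hc 0).fun_mul (hc 0)) ((hc 1).fun_mul (hc 1)), pd_mul (hc 0) (hc 0), pd_mul (hc 1) (hc 1),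
      pd_mul (hc 2) (hc 2)]
    simp only [pd_coord]
    fin_cases j <;> simp <;> ring
  rw [h2] at h1
  field_simp
  linarith

/-- inverse powers of the norm -/
def qn (n : ℕ) (z : V3) : ℝ := (‖z‖ ^ n)⁻¹

lemma cd_qn (n : ℕ) {x : V3} (hx : x ≠ 0) : ContDiffAt ℝ 2 (qn n) x :=
  ((cd_norm hx).pow n).inv (pow_ne_zero _ (norm_ne_zero_iff.2 hx))

lemma pd_qn (n : ℕ) {x : V3} (hx : x ≠ 0) (j : Fin 3) : pd j (qn n) x = -n * x j * qn (n+2) x := by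
  have hn : ‖x‖ ≠ 0 := norm_ne_zero_iff.2 hx
  have hd : HasDerivAt (fun r : ℝ => (r ^ n)⁻¹) (-(n * ‖x‖ ^ (n-1)) / (‖x‖ ^ n) ^ 2) ‖x‖ :=
    (hasDerivAt_pow n ‖x‖).inv (pow_ne_zero _ hn)
  have := pd_comp (Φ := fun r : ℝ => (r ^ n)⁻¹) hd.differentiableAt (cd_diff (cd_norm hx)) j
  change pd j (fun z : V3 => (‖z‖ ^ n)⁻¹) x = _
  rw [this, pd_norm hx, hd.deriv, qn]
  rcases n with _ | n
  · simp
  · simp only [Nat.add_sub_cancel]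
    field_simp
    ring

lemma ev_ne {x : V3} (hx : x ≠ 0) : ∀ᶠ z in 𝓝 x, z ≠ 0 := isOpen_ne.mem_nhds hx

lemma lap_qn (n : ℕ) {x : V3} (hx : x ≠ 0) : lap3 (qn n) x = n * (n - 1) * qn (n+2) x := by
  have hn : ‖x‖ ≠ 0 := norm_ne_zero_iff.2 hx
  have : ∀ j, pd j (fun z => pd j (qn n) z) x = -n * qn (n+2) x + n * (n+2) * x j ^ 2 * qn (n+4) x := by
    intro j
    have e : (fun z => pd j (qn n) z) =ᶠ[𝓝 x] fun z => (-n * z j) * qn (n+2) z := by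
      filter_upwards [ev_ne hx] with z hz using pd_qn n hz j
    have hc := cd_diff (cd_coord j x)
    rw [pd_congr e, pd_mul (hc.const_mul _) (cd_diff (cd_qn _ hx)), pd_qn _ hx,
      pd_mul (differentiableAt_const _) hc, pd_coord]
    simp [pd]
    ring
  unfold lap3
  simp only [this, Fin.sum_univ_three]
  have e : qn (n+2) x = ‖x‖ ^ 2 * qn (n+4) x := by
    unfold qn; rw [pow_add, pow_add _ n 4]; field_simp
  rw [e, norm3_sq]; ring

/-- x_i / r^n -/
def mq (i : Fin 3) (n : ℕ) (z : V3) : ℝ := z i * qn n z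

lemma cd_mq (i : Fin 3) (n : ℕ) {x : V3} (hx : x ≠ 0) : ContDiffAt ℝ 2 (mq i n) x :=
  (cd_coord i x).mul (cd_qn n hx)

lemma pd_mq (i : Fin 3) (n : ℕ) {x : V3} (hx : x ≠ 0) (j : Fin 3) :
    pd j (mq i n) x = (if i = j then 1 else 0) * qn n x - n * x i * x j * qn (n+2) x := by
  change pd j (fun z => z i * qn n z) x = _
  rw [pd_mul (cd_diff (cd_coord i x)) (cd_diff (cd_qn n hx)), pd_coord, pd_qn n hx]
  ring

lemma lap_mq (i : Fin 3) (n : ℕ) {x : V3} (hx : x ≠ 0) :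
    lap3 (mq i n) x = n * (n - 3) * x i * qn (n+2) x := by
  change lap3 (fun z => z i * qn n z) x = _
  rw [lap_mul (cd_coord i x) (cd_qn n hx), lap_coord, lap_qn n hx]
  simp only [pd_coord, pd_qn n hx, ite_mul, one_mul, zero_mul, Finset.sum_ite_eq, Finset.mem_univ, if_true]
  ring

lemma qn_unit (n : ℕ) {x : V3} (h : ‖x‖ = 1) : qn n x = 1 := by simp [qn, h]

lemma mq_unit (i : Fin 3) (n : ℕ) {x : V3} (h : ‖x‖ = 1) : mq i n x = x i := by simp [mq, qn_unit n h]

lemma unit_ne {x : V3} (h : ‖x‖ = 1) : x ≠ 0 := by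
  rintro rfl; simp at h

lemma pd_MP {M : V3 → ℝ} {Φ : ℝ → ℝ} {x : V3} (h : ‖x‖ = 1) (hM : ContDiffAt ℝ 2 M x)
    (hΦ : DifferentiableAt ℝ Φ (x 2)) (j : Fin 3) : pd j (fun z => M z * Φ (mq 2 1 z)) x
      = pd j M x * Φ (x 2) + M x * (deriv Φ (x 2) * ((if 2 = j then 1 else 0) - x 2 * x j)) := by
  have hY := cd_mq 2 1 (unit_ne h)
  have e : mq 2 1 x = x 2 := mq_unit _ _ h
  rw [← e] at hΦ
  rw [pd_mul (g := fun z => Φ (mq 2 1 z)) (cd_diff hM) (hΦ.comp x (cd_diff hY)), pd_comp hΦ (cd_diff hY), e, pd_mq _ _ (unit_ne h),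
    qn_unit _ h, qn_unit _ h]
  push_cast; ring

lemma lap_MP {M : V3 → ℝ} {Φ : ℝ → ℝ} {x : V3} (h : ‖x‖ = 1) (hM : ContDiffAt ℝ 2 M x)
    (hΦ : ContDiffAt ℝ 2 Φ (x 2)) : lap3 (fun z => M z * Φ (mq 2 1 z)) x
      = lap3 M x * Φ (x 2) + (2 * (pd 2 M x - x 2 * (x 0 * pd 0 M x + x 1 * pd 1 M x + x 2 * pd 2 M x)) - 2 * x 2 * M x)
        * deriv Φ (x 2) + M x * (1 - x 2 ^ 2) * deriv (deriv Φ) (x 2) := by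
  have hY := cd_mq 2 1 (unit_ne h)
  have e : mq 2 1 x = x 2 := mq_unit _ _ h
  rw [← e] at hΦ
  rw [lap_mul (g := fun z => Φ (mq 2 1 z)) hM (hΦ.comp x hY), lap_comp hΦ hY]
  simp only [pd_comp (cd_diff hΦ) (cd_diff hY), e, pd_mq _ _ (unit_ne h), qn_unit _ h, lap_mq _ _ (unit_ne h), Fin.sum_univ_three]
  have := norm3_sq x
  rw [h] at this
  have h0 : x 0 ^ 2 = 1 - x 1 ^ 2 - x 2 ^ 2 := by linarith
  simp
  ring_nf
  rw [h0]
  ring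

lemma cd_MP {M : V3 → ℝ} {Φ : ℝ → ℝ} {x : V3} (h : ‖x‖ = 1) (hM : ContDiffAt ℝ 2 M x)
    (hΦ : ContDiffAt ℝ 2 Φ (x 2)) : ContDiffAt ℝ 2 (fun z => M z * Φ (mq 2 1 z)) x := by
  have hY := cd_mq 2 1 (unit_ne h)
  have e : mq 2 1 x = x 2 := mq_unit _ _ h
  rw [← e] at hΦ
  exact hM.mul (hΦ.comp x hY)


/-- local representation of an axisymmetric homogeneous field -/
def AxRep (u : V3 → V3) (C B N : ℝ → ℝ) (x : V3) : Prop :=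
  ((fun z => u z 0) =ᶠ[𝓝 x] fun z => mq 0 2 z * C (mq 2 1 z) + mq 1 2 z * (fun y => -B y) (mq 2 1 z)) ∧
  ((fun z => u z 1) =ᶠ[𝓝 x] fun z => mq 1 2 z * C (mq 2 1 z) + mq 0 2 z * B (mq 2 1 z)) ∧
  ((fun z => u z 2) =ᶠ[𝓝 x] fun z => mq 2 2 z * C (mq 2 1 z) + qn 1 z * (fun y => -N y) (mq 2 1 z))

lemma pd_two {M M' : V3 → ℝ} {Φ Ψ : ℝ → ℝ} {x : V3} (h : ‖x‖ = 1) (hM : ContDiffAt ℝ 2 M x)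
    (hM' : ContDiffAt ℝ 2 M' x)
    (hΦ : ContDiffAt ℝ 2 Φ (x 2)) (hΨ : ContDiffAt ℝ 2 Ψ (x 2)) (j : Fin 3) :
    pd j (fun z => M z * Φ (mq 2 1 z) + M' z * Ψ (mq 2 1 z)) x
      = pd j M x * Φ (x 2) + M x * (deriv Φ (x 2) * ((if 2 = j then 1 else 0) - x 2 * x j))
      + (pd j M' x * Ψ (x 2) + M' x * (deriv Ψ (x 2) * ((if 2 = j then 1 else 0) - x 2 * x j))) := by
  rw [pd_add (cd_diff (cd_MP h hM hΦ)) (cd_diff (cd_MP h hM' hΨ)), pd_MP h hM (cd_diff hΦ), pd_MP h hM' (cd_diff hΨ)]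

lemma lap_two {M M' : V3 → ℝ} {Φ Ψ : ℝ → ℝ} {x : V3} (h : ‖x‖ = 1) (hM : ContDiffAt ℝ 2 M x)
    (hM' : ContDiffAt ℝ 2 M' x)
    (hΦ : ContDiffAt ℝ 2 Φ (x 2)) (hΨ : ContDiffAt ℝ 2 Ψ (x 2)) :
    lap3 (fun z => M z * Φ (mq 2 1 z) + M' z * Ψ (mq 2 1 z)) x
      = (lap3 M x * Φ (x 2) + (2 * (pd 2 M x - x 2 * (x 0 * pd 0 M x + x 1 * pd 1 M x + x 2 * pd 2 M x)) - 2 * x 2 * M x)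
        * deriv Φ (x 2) + M x * (1 - x 2 ^ 2) * deriv (deriv Φ) (x 2))
      + (lap3 M' x * Ψ (x 2) + (2 * (pd 2 M' x - x 2 * (x 0 * pd 0 M' x + x 1 * pd 1 M' x + x 2 * pd 2 M' x)) - 2 * x 2 * M' x)
        * deriv Ψ (x 2) + M' x * (1 - x 2 ^ 2) * deriv (deriv Ψ) (x 2)) := by
  rw [lap_add (cd_MP h hM hΦ) (cd_MP h hM' hΨ), lap_MP h hM hΦ, lap_MP h hM' hΨ]

lemma deriv_negf (f : ℝ → ℝ) : deriv (fun y => -f y) = fun y => -deriv f y := by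
  funext y; exact deriv.fun_neg

section rep
variable {u : V3 → V3} {C B N : ℝ → ℝ} {x : V3}

lemma rep_vals (h : ‖x‖ = 1) (hr : AxRep u C B N x) :
    u x 0 = x 0 * C (x 2) - x 1 * B (x 2) ∧ u x 1 = x 1 * C (x 2) + x 0 * B (x 2) ∧
    u x 2 = x 2 * C (x 2) - N (x 2) := by
  have h0 := hr.1.self_of_nhds
  have h1 := hr.2.1.self_of_nhds
  have h2 := hr.2.2.self_of_nhds
  simp only [mq_unit _ _ h, qn_unit _ h] at h0 h1 h2
  refine ⟨?_, ?_, ?_⟩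
  · rw [h0]; ring
  · rw [h1]
  · rw [h2]; ring

lemma rep_pd (h : ‖x‖ = 1) (hr : AxRep u C B N x) (hC : ContDiffAt ℝ 2 C (x 2))
    (hB : ContDiffAt ℝ 2 B (x 2)) (hN : ContDiffAt ℝ 2 N (x 2)) (j : Fin 3) :
    pd j (fun z => u z 0) x = ((if 0 = j then 1 else 0) - 2 * x 0 * x j) * C (x 2)
      - ((if 1 = j then 1 else 0) - 2 * x 1 * x j) * B (x 2)
      + (x 0 * deriv C (x 2) - x 1 * deriv B (x 2)) * ((if 2 = j then 1 else 0) - x 2 * x j) ∧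
    pd j (fun z => u z 1) x = ((if 1 = j then 1 else 0) - 2 * x 1 * x j) * C (x 2)
      + ((if 0 = j then 1 else 0) - 2 * x 0 * x j) * B (x 2)
      + (x 1 * deriv C (x 2) + x 0 * deriv B (x 2)) * ((if 2 = j then 1 else 0) - x 2 * x j) ∧
    pd j (fun z => u z 2) x = ((if 2 = j then 1 else 0) - 2 * x 2 * x j) * C (x 2)
      + x j * N (x 2)
      + (x 2 * deriv C (x 2) - deriv N (x 2)) * ((if 2 = j then 1 else 0) - x 2 * x j) := by
  have hx := unit_ne h
  refine ⟨?_, ?_, ?_⟩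
  · rw [pd_congr hr.1, pd_two h (cd_mq _ _ hx) (cd_mq _ _ hx) hC hB.neg]
    simp only [pd_mq _ _ hx, mq_unit _ _ h, qn_unit _ h, deriv_negf]
    push_cast; ring
  · rw [pd_congr hr.2.1, pd_two h (cd_mq _ _ hx) (cd_mq _ _ hx) hC hB]
    simp only [pd_mq _ _ hx, mq_unit _ _ h, qn_unit _ h]
    push_cast; ring
  · rw [pd_congr hr.2.2, pd_two h (cd_mq _ _ hx) (cd_qn _ hx) hC hN.neg]
    simp only [pd_mq _ _ hx, mq_unit _ _ h, qn_unit _ h, deriv_negf, pd_qn _ hx]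
    push_cast; ring

lemma rep_lap (h : ‖x‖ = 1) (hr : AxRep u C B N x) (hC : ContDiffAt ℝ 2 C (x 2))
    (hB : ContDiffAt ℝ 2 B (x 2)) (hN : ContDiffAt ℝ 2 N (x 2)) :
    lap3 (fun z => u z 0) x = (-2 * x 0 * C (x 2) - 4 * x 2 * x 0 * deriv C (x 2) + x 0 * (1 - x 2 ^ 2) * deriv (deriv C) (x 2))
      - (-2 * x 1 * B (x 2) - 4 * x 2 * x 1 * deriv B (x 2) + x 1 * (1 - x 2 ^ 2) * deriv (deriv B) (x 2)) ∧
    lap3 (fun z => u z 1) x = (-2 * x 1 * C (x 2) - 4 * x 2 * x 1 * deriv C (x 2) + x 1 * (1 - x 2 ^ 2) * deriv (deriv C) (x 2))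
      + (-2 * x 0 * B (x 2) - 4 * x 2 * x 0 * deriv B (x 2) + x 0 * (1 - x 2 ^ 2) * deriv (deriv B) (x 2)) ∧
    lap3 (fun z => u z 2) x = (-2 * x 2 * C (x 2) + (2 - 4 * x 2 * x 2) * deriv C (x 2) + x 2 * (1 - x 2 ^ 2) * deriv (deriv C) (x 2))
      - (-2 * x 2 * deriv N (x 2) + (1 - x 2 ^ 2) * deriv (deriv N) (x 2)) := by
  have hx := unit_ne h
  have hn := norm3_sq x
  rw [h] at hn
  have h0 : x 0 ^ 2 = 1 - x 1 ^ 2 - x 2 ^ 2 := by linarith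
  refine ⟨?_, ?_, ?_⟩
  · rw [lap_congr hr.1, lap_two h (cd_mq _ _ hx) (cd_mq _ _ hx) hC hB.neg]
    simp only [pd_mq _ _ hx, mq_unit _ _ h, qn_unit _ h, deriv_negf, lap_mq _ _ hx]
    simp
    linear_combination (-4 * x 0 * x 2 * deriv C (x 2) + 4 * x 1 * x 2 * deriv B (x 2)) * hn
  · rw [lap_congr hr.2.1, lap_two h (cd_mq _ _ hx) (cd_mq _ _ hx) hC hB]
    simp only [pd_mq _ _ hx, mq_unit _ _ h, qn_unit _ h, lap_mq _ _ hx]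
    simp
    linear_combination (-4 * x 1 * x 2 * deriv C (x 2) - 4 * x 0 * x 2 * deriv B (x 2)) * hn
  · rw [lap_congr hr.2.2, lap_two h (cd_mq _ _ hx) (cd_qn _ hx) hC hN.neg]
    simp only [pd_mq _ _ hx, mq_unit _ _ h, qn_unit _ h, deriv_negf, lap_mq _ _ hx, pd_qn _ hx, lap_qn _ hx]
    simp
    linear_combination (-4 * x 2 ^ 2 * deriv C (x 2) + 2 * x 2 * deriv N (x 2)) * hn

variable {p : V3 → ℝ}

lemma ns_div (h : ‖x‖ = 1) (hr : AxRep u C B N x) (hC : ContDiffAt ℝ 2 C (x 2))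
    (hB : ContDiffAt ℝ 2 B (x 2)) (hN : ContDiffAt ℝ 2 N (x 2)) (hNS : NSEq u p x) :
    C (x 2) + x 2 * N (x 2) - (1 - x 2 ^ 2) * deriv N (x 2) = 0 := by
  have h1 := hNS.2
  rw [Fin.sum_univ_three, (rep_pd h hr hC hB hN 0).1, (rep_pd h hr hC hB hN 1).2.1,
    (rep_pd h hr hC hB hN 2).2.2] at h1
  have hn := norm3_sq x
  rw [h] at hn
  simp at h1
  linear_combination h1 - (2 * C (x 2) + x 2 * deriv C (x 2)) * hn

lemma ns_r (h : ‖x‖ = 1) (hr : AxRep u C B N x) (hC : ContDiffAt ℝ 2 C (x 2))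
    (hB : ContDiffAt ℝ 2 B (x 2)) (hN : ContDiffAt ℝ 2 N (x 2)) (hNS : NSEq u p x)
    (hp : x 0 * pd 0 p x + x 1 * pd 1 p x + x 2 * pd 2 p x = -2 * p x) :
    (1 - x 2 ^ 2) * (deriv (deriv C) (x 2) - 2 * deriv N (x 2) - x 2 * deriv (deriv N) (x 2))
      + (-2 * x 2 + (1 - x 2 ^ 2) * N (x 2)) * (deriv C (x 2) - N (x 2) - x 2 * deriv N (x 2))
      + (C (x 2) - x 2 * N (x 2)) ^ 2 + (1 - x 2 ^ 2) * (N (x 2) ^ 2 + B (x 2) ^ 2) + 2 * p x = 0 := by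
  have hd := ns_div h hr hC hB hN hNS
  have h1 := hNS.1
  have l := rep_lap h hr hC hB hN
  have e0 := h1 0
  have e1 := h1 1
  have e2 := h1 2
  have q0 := rep_pd h hr hC hB hN 0
  have q1 := rep_pd h hr hC hB hN 1
  have q2 := rep_pd h hr hC hB hN 2
  have v := rep_vals h hr
  rw [Fin.sum_univ_three, l.1, q0.1, q1.1, q2.1, v.1, v.2.1, v.2.2] at e0
  rw [Fin.sum_univ_three, l.2.1, q0.2.1, q1.2.1, q2.2.1, v.1, v.2.1, v.2.2] at e1
  rw [Fin.sum_univ_three, l.2.2, q0.2.2, q1.2.2, q2.2.2, v.1, v.2.1, v.2.2] at e2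
  have hn := norm3_sq x
  rw [h] at hn
  simp at e0 e1 e2
  have key := congrArg₂ (· + ·) (congrArg₂ (· + ·) (congrArg (x 0 * ·) e0) (congrArg (x 1 * ·) e1)) (congrArg (x 2 * ·) e2)
  simp only at key
  generalize C (x 2) = c at *
  generalize B (x 2) = b at *
  generalize N (x 2) = n at *
  generalize deriv C (x 2) = c1 at *
  generalize deriv B (x 2) = b1 at *
  generalize deriv N (x 2) = n1 at *
  generalize deriv (deriv C) (x 2) = c2 at *
  generalize deriv (deriv B) (x 2) = b2 at *
  generalize deriv (deriv N) (x 2) = n2 at *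
  generalize pd 0 p x = p0 at *
  generalize pd 1 p x = p1 at *
  generalize pd 2 p x = p2 at *
  generalize p x = pp at *
  generalize x 0 = X at *
  generalize x 1 = Y at *
  generalize x 2 = Z at *
  linear_combination -key + hp + 2 * hd - (2*c+4*Z*c1-(1-Z^2)*c2 + c*(-c*(1+2*(X^2+Y^2+Z^2))+2*Z*n) - b^2 + Z*n*c
    + c1*(Z*c-n+Z^2*n-Z*(X^2+Y^2+Z^2)*c) - (c1-Z*n1)*Z*c) * hn

lemma ns_axis (h : ‖x‖ = 1) (hr : AxRep u C B N x) (hC : ContDiffAt ℝ 2 C (x 2))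
    (hB : ContDiffAt ℝ 2 B (x 2)) (hN : ContDiffAt ℝ 2 N (x 2)) (hNS : NSEq u p x)
    {P : ℝ → ℝ} (hP : DifferentiableAt ℝ P (x 2))
    (hp : p =ᶠ[𝓝 x] fun z => qn 2 z * P (mq 2 1 z)) (hx1 : x 1 = 0) (hx0 : x 0 ≠ 0)
    (hd1 : deriv C (x 2) + N (x 2) + 3 * x 2 * deriv N (x 2) - (1 - x 2 ^ 2) * deriv (deriv N) (x 2) = 0) :
    (2 * B (x 2) + 4 * x 2 * deriv B (x 2) - (1 - x 2 ^ 2) * deriv (deriv B) (x 2)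
      + 2 * x 2 * N (x 2) * B (x 2) - (1 - x 2 ^ 2) * N (x 2) * deriv B (x 2) = 0) ∧
    (deriv P (x 2) - (deriv C (x 2) - N (x 2) - x 2 * deriv N (x 2)) + N (x 2) * (C (x 2) - x 2 * N (x 2))
      + x 2 * N (x 2) ^ 2 + x 2 * B (x 2) ^ 2 = 0) := by
  have hd := ns_div h hr hC hB hN hNS
  have h1 := hNS.1
  have l := rep_lap h hr hC hB hN
  have e0 := h1 0
  have e1 := h1 1
  have e2 := h1 2
  have q0 := rep_pd h hr hC hB hN 0
  have q1 := rep_pd h hr hC hB hN 1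
  have q2 := rep_pd h hr hC hB hN 2
  have v := rep_vals h hr
  have hq : ∀ j, pd j p x = -2 * x j * P (x 2) + deriv P (x 2) * ((if 2 = j then 1 else 0) - x 2 * x j) := by
    intro j
    rw [pd_congr hp, pd_MP h (cd_qn _ (unit_ne h)) hP, pd_qn _ (unit_ne h), qn_unit _ h, qn_unit _ h]
    push_cast; ring
  rw [Fin.sum_univ_three, l.1, q0.1, q1.1, q2.1, v.1, v.2.1, v.2.2, hq] at e0
  rw [Fin.sum_univ_three, l.2.1, q0.2.1, q1.2.1, q2.2.1, v.1, v.2.1, v.2.2, hq] at e1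
  rw [Fin.sum_univ_three, l.2.2, q0.2.2, q1.2.2, q2.2.2, v.1, v.2.1, v.2.2, hq] at e2
  have hn := norm3_sq x
  rw [h] at hn
  simp [hx1] at e0 e1 e2 hn
  generalize C (x 2) = c at *
  generalize B (x 2) = b at *
  generalize N (x 2) = n at *
  generalize P (x 2) = pp at *
  generalize deriv C (x 2) = c1 at *
  generalize deriv B (x 2) = b1 at *
  generalize deriv N (x 2) = n1 at *
  generalize deriv (deriv C) (x 2) = c2 at *
  generalize deriv (deriv B) (x 2) = b2 at *
  generalize deriv (deriv N) (x 2) = n2 at *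
  generalize deriv P (x 2) = pp1 at *
  generalize x 0 = X at *
  generalize x 2 = Z at *
  have hX : X ^ 2 = 1 - Z ^ 2 := by linarith
  constructor
  · apply mul_left_cancel₀ hx0
    linear_combination e1 - X * (2 * b * c + Z * c * b1) * hn
  · apply mul_left_cancel₀ hx0
    have key := congrArg₂ (· - ·) (congrArg (Z * ·) e0) (congrArg (X * ·) e2)
    linear_combination -key + X * hd1 + X * n * hd + X * c * (n + Z * n1) * hn
end rep


/-- the punctured conical region around the negative axis -/
def Om (d : ℝ) : Set V3 := {x | -‖x‖ < x 2 ∧ x 2 < (-1 + d) * ‖x‖}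

/-- meridian curve -/
def gam (y : ℝ) : V3 := !₂[√(1 - y ^ 2), 0, y]

lemma gam0 (y : ℝ) : gam y 0 = √(1 - y ^ 2) := rfl
lemma gam1 (y : ℝ) : gam y 1 = 0 := rfl
lemma gam2 (y : ℝ) : gam y 2 = y := rfl

lemma Om_open (d : ℝ) : IsOpen (Om d) := by
  have h2 : Continuous fun x : V3 => x 2 := (EuclideanSpace.proj 2 : V3 →L[ℝ] ℝ).continuous
  exact (isOpen_lt continuous_norm.neg h2).inter (isOpen_lt h2 (continuous_const.mul continuous_norm))

lemma Om_ne {d : ℝ} {x : V3} (hx : x ∈ Om d) : x ≠ 0 := by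
  rintro rfl
  have := hx.1
  simp at this

lemma Om_pos {d : ℝ} {x : V3} (hx : x ∈ Om d) : 0 < ‖x‖ := norm_pos_iff.2 (Om_ne hx)

lemma mq21 (x : V3) : mq 2 1 x = x 2 / ‖x‖ := by simp [mq, qn, div_eq_mul_inv]

lemma Om_iff {d : ℝ} {x : V3} (hx : x ≠ 0) : x ∈ Om d ↔ mq 2 1 x ∈ Set.Ioo (-1) (-1 + d) := by
  have h := norm_pos_iff.2 hx
  rw [mq21, Set.mem_Ioo, lt_div_iff₀ h, div_lt_iff₀ h, neg_one_mul]
  rfl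

lemma gam_norm {y : ℝ} (h1 : -1 ≤ y) (h2 : y ≤ 1) : ‖gam y‖ = 1 := by
  have h := norm3_sq (gam y)
  rw [gam0, gam1, gam2, Real.sq_sqrt (by nlinarith)] at h
  have := norm_nonneg (gam y)
  nlinarith

lemma gam_mem {d y : ℝ} (hd : d ≤ 1) (h : y ∈ Set.Ioo (-1) (-1 + d)) : gam y ∈ Om d := by
  have := gam_norm h.1.le (by linarith [h.2])
  rw [Om_iff (unit_ne this), mq_unit _ _ this, gam2]
  exact h

lemma Om_smul {d l : ℝ} {x : V3} (hl : 0 < l) (hx : x ∈ Om d) : l • x ∈ Om d := by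
  constructor
  · simp only [norm_smul, Real.norm_eq_abs, abs_of_pos hl, PiLp.smul_apply, smul_eq_mul]
    nlinarith [hx.1]
  · simp only [norm_smul, Real.norm_eq_abs, abs_of_pos hl, PiLp.smul_apply, smul_eq_mul]
    nlinarith [hx.2]

lemma Om_sub {d δ : ℝ} (hδ : 0 < δ) (hd : d ≤ δ ^ 2 / 2) : Om d ⊆ cone3 (NSCap δ) := by
  intro x hx
  have hr := Om_pos hx
  have hY := (Om_iff (Om_ne hx)).1 hx
  set z : V3 := ‖x‖⁻¹ • x with hz
  have hz2 : z 2 = mq 2 1 x := by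
    rw [mq21]; simp [hz]; ring
  have hzn : ‖z‖ = 1 := by
    rw [hz, norm_smul, norm_inv, norm_norm, inv_mul_cancel₀ hr.ne']
  refine ⟨Om_ne hx, ⟨⟨mem_sphere_zero_iff_norm.2 hzn, ?_⟩, ?_⟩⟩
  · rw [Metric.mem_ball, dist_eq_norm]
    have h1 := norm3_sq (z - S3)
    have h2 := norm3_sq z
    rw [hzn] at h2
    simp [S3] at h1
    have h3 := norm_nonneg (z - S3)
    have : ‖z - S3‖ ^ 2 < δ ^ 2 := by
      simp only [S3]
      rw [h1]
      nlinarith [hY.2, hY.1]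
    exact lt_of_pow_lt_pow_left₀ 2 hδ.le this
  · intro h
    have : z 2 = S3 2 := congrArg (fun v : V3 => v 2) h
    rw [hz2] at this
    simp [S3] at this
    linarith [hY.1]

lemma gam_cd {y : ℝ} (h : y ∈ Set.Ioo (-1:ℝ) 1) : ContDiffAt ℝ 2 gam y := by
  have hs : ContDiffAt ℝ 2 (fun y : ℝ => √(1 - y ^ 2)) y := by
    apply ContDiffAt.sqrt (by fun_prop)
    nlinarith [h.1, h.2]
  rw [contDiffAt_piLp]
  intro i
  fin_cases i
  · exact hs
  · exact contDiffAt_const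
  · exact contDiffAt_id

lemma euler_p {p : V3 → ℝ} {x : V3} (hp : DifferentiableAt ℝ p x)
    (h : ∀ l : ℝ, 0 < l → p (l • x) = (l ^ 2)⁻¹ * p x) :
    x 0 * pd 0 p x + x 1 * pd 1 p x + x 2 * pd 2 p x = -2 * p x := by
  have h1 : HasDerivAt (fun l : ℝ => l • x) x 1 := by
    simpa using (hasDerivAt_id (1:ℝ)).smul_const x
  have h2 : HasDerivAt (fun l : ℝ => p (l • x)) (fderiv ℝ p x x) 1 := by
    have hp' : HasFDerivAt p (fderiv ℝ p x) ((1:ℝ) • x) := by rw [one_smul]; exact hp.hasFDerivAt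
    exact hp'.comp_hasDerivAt (1:ℝ) h1
  have h3 : HasDerivAt (fun l : ℝ => (l ^ 2)⁻¹ * p x) (-2 * p x) 1 := by
    have := ((hasDerivAt_pow 2 (1:ℝ)).inv (by norm_num)).mul_const (p x)
    refine HasDerivAt.congr_deriv (f' := -(((2:ℕ):ℝ) * 1 ^ (2 - 1)) / (1 ^ 2) ^ 2 * p x) this ?_
    norm_num
  have h4 : (fun l : ℝ => p (l • x)) =ᶠ[𝓝 1] fun l : ℝ => (l ^ 2)⁻¹ * p x := by
    filter_upwards [lt_mem_nhds (zero_lt_one' ℝ)] with l hl using h l hl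
  have h5 := h2.unique (h3.congr_of_eventuallyEq h4)
  rw [← h5]
  have hx : x = x 0 • e3 0 + x 1 • e3 1 + x 2 • e3 2 := by
    ext i
    fin_cases i <;> simp [e3]
  conv_rhs => rw [hx]
  simp only [map_add, map_smul, smul_eq_mul, pd]
  rw [← hx]

section setup
variable {u : V3 → V3} {p : V3 → ℝ} {d : ℝ}

/-- profile functions -/
def Cf (u : V3 → V3) (y : ℝ) : ℝ := u (gam y) 0 / √(1 - y ^ 2)
def Bf (u : V3 → V3) (y : ℝ) : ℝ := u (gam y) 1 / √(1 - y ^ 2)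
def Nf (u : V3 → V3) (y : ℝ) : ℝ := u (gam y) 0 * y / √(1 - y ^ 2) - u (gam y) 2

lemma ucomp_cd (hd : d ≤ 1) (hu : ∀ x ∈ Om d, ContDiffAt ℝ 2 u x) {y : ℝ}
    (hy : y ∈ Set.Ioo (-1) (-1 + d)) (i : Fin 3) : ContDiffAt ℝ 2 (fun y => u (gam y) i) y := by
  have h1 : ContDiffAt ℝ 2 (fun y => u (gam y)) y :=
    (hu _ (gam_mem hd hy)).comp y (gam_cd ⟨hy.1, by linarith [hy.2]⟩)
  exact (contDiffAt_piLp 2).1 h1 i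

lemma prof_cd (hd : d ≤ 1) (hu : ∀ x ∈ Om d, ContDiffAt ℝ 2 u x) {y : ℝ}
    (hy : y ∈ Set.Ioo (-1) (-1 + d)) :
    ContDiffAt ℝ 2 (Cf u) y ∧ ContDiffAt ℝ 2 (Bf u) y ∧ ContDiffAt ℝ 2 (Nf u) y := by
  have h := ucomp_cd hd hu hy
  have hpos : 0 < 1 - y ^ 2 := by nlinarith [hy.1, hy.2]
  have hs : ContDiffAt ℝ 2 (fun y : ℝ => √(1 - y ^ 2)) y := by
    apply ContDiffAt.sqrt (by fun_prop)
    exact hpos.ne'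
  have hne : √(1 - y ^ 2) ≠ 0 := (Real.sqrt_pos.2 hpos).ne'
  exact ⟨(h 0).div hs hne, (h 1).div hs hne, (((h 0).mul contDiffAt_id).div hs hne).sub (h 2)⟩

lemma rep_pt (hd : d ≤ 1) (hh : ∀ x ∈ Om d, ∀ l : ℝ, 0 < l → u (l • x) = l⁻¹ • u x)
    (ha : AxisymOn u (Om d)) {x : V3} (hx : x ∈ Om d) :
    u x 0 = mq 0 2 x * Cf u (mq 2 1 x) + mq 1 2 x * (fun y => -Bf u y) (mq 2 1 x) ∧
    u x 1 = mq 1 2 x * Cf u (mq 2 1 x) + mq 0 2 x * Bf u (mq 2 1 x) ∧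
    u x 2 = mq 2 2 x * Cf u (mq 2 1 x) + qn 1 x * (fun y => -Nf u y) (mq 2 1 x) := by
  have hr := Om_pos hx
  have hY := (Om_iff (Om_ne hx)).1 hx
  have hx2 : x 2 = ‖x‖ * mq 2 1 x := by rw [mq21]; field_simp
  have hn := norm3_sq x
  simp only [Cf, Bf, Nf]
  have hm0 : mq 0 2 x = x 0 / ‖x‖ ^ 2 := by simp [mq, qn, div_eq_mul_inv]
  have hm1 : mq 1 2 x = x 1 / ‖x‖ ^ 2 := by simp [mq, qn, div_eq_mul_inv]
  have hm2 : mq 2 2 x = x 2 / ‖x‖ ^ 2 := by simp [mq, qn, div_eq_mul_inv]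
  have hq : qn 1 x = 1 / ‖x‖ := by simp [qn]
  rw [hm0, hm1, hm2, hq]
  set y := mq 2 1 x with hy
  set r := ‖x‖ with hrd
  have hpos : 0 < 1 - y ^ 2 := by nlinarith [hY.1, hY.2]
  have hg := gam_mem hd hY
  have hgn := gam_norm hY.1.le (by linarith [hY.2])
  have hax := ha x hx (r • gam y) (Om_smul hr hg) (by rw [norm_smul, hgn]; simp [hrd])
    (by simp [gam2, hx2])
  have hs2 : √(1 - y ^ 2) ^ 2 = 1 - y ^ 2 := Real.sq_sqrt hpos.le
  have hs := Real.sqrt_pos.2 hpos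
  have hrg : rho (r • gam y) = r * √(1 - y ^ 2) := by
    simp only [rho, PiLp.smul_apply, smul_eq_mul, gam0, gam1]
    rw [mul_zero, zero_pow two_ne_zero, add_zero, Real.sqrt_sq (by positivity)]
  have hrx : rho x = r * √(1 - y ^ 2) := by
    unfold rho
    rw [show x 0 ^ 2 + x 1 ^ 2 = (r * √(1 - y ^ 2)) ^ 2 by
      rw [mul_pow, hs2]; rw [hx2] at hn; linarith, Real.sqrt_sq (by positivity)]
  obtain ⟨a1, a2, a3⟩ := hax
  simp only [uRc, uTc, uPc, hrg, hrx, hh _ hg r hr, PiLp.smul_apply, smul_eq_mul, gam0, gam1, gam2, norm_smul, hgn,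
    Real.norm_eq_abs, abs_of_pos hr, ← hrd] at a1 a2 a3
  generalize u (gam y) 0 = a at *
  generalize u (gam y) 1 = b at *
  generalize u (gam y) 2 = c at *
  generalize √(1 - y ^ 2) = s at *
  rw [hx2] at a1 a2 hn
  rw [hx2]
  generalize u x 0 = u0 at *
  generalize u x 1 = u1 at *
  generalize u x 2 = u2 at *
  generalize x 0 = X at *
  generalize x 1 = Y at *
  clear_value r y
  clear hx2 hm0 hm1 hm2 hq hrg hrx hg hgn
  have hr0 := hr.ne'
  have hs0 := hs.ne'
  field_simp at a1 a2 a3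
  have b1 : u0 * X + u1 * Y + u2 * (r * y) = a * s + c * y := by
    linarith
  have b2 : (u0 * X + u1 * Y) * y - u2 * r * s ^ 2 = s * (a * y - c * s) := by
    linarith
  have b3 : -(u0 * Y) + u1 * X = s * b := by
    linarith
  have bA : u0 * X + u1 * Y = a * s := by
    linear_combination s^2 * b1 + y * b2 - (u0 * X + u1 * Y - a * s) * hs2
  have bC : u2 * r = c := by
    linear_combination y * b1 - b2 - (u2 * r - c) * hs2
  have hXY : X ^ 2 + Y ^ 2 = r ^ 2 * s ^ 2 := by rw [hs2]; linarith
  refine ⟨?_, ?_, ?_⟩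
  · field_simp
    apply mul_right_cancel₀ hs0
    linear_combination X * bA - Y * b3 - u0 * hXY
  · field_simp
    apply mul_right_cancel₀ hs0
    linear_combination Y * bA + X * b3 - u1 * hXY
  · field_simp
    linear_combination s * bC

lemma rep_ax (hd : d ≤ 1) (hh : ∀ x ∈ Om d, ∀ l : ℝ, 0 < l → u (l • x) = l⁻¹ • u x)
    (ha : AxisymOn u (Om d)) {x : V3} (hx : x ∈ Om d) : AxRep u (Cf u) (Bf u) (Nf u) x := by
  have hev := (Om_open d).mem_nhds hx
  refine ⟨?_, ?_, ?_⟩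
  · filter_upwards [hev] with z hz using (rep_pt hd hh ha hz).1
  · filter_upwards [hev] with z hz using (rep_pt hd hh ha hz).2.1
  · filter_upwards [hev] with z hz using (rep_pt hd hh ha hz).2.2

lemma unit_mem {x : V3} (h : ‖x‖ = 1) (hy : x 2 ∈ Set.Ioo (-1) (-1 + d)) : x ∈ Om d := by
  rw [Om_iff (unit_ne h), mq_unit _ _ h]; exact hy

lemma sph_vals (hd : d ≤ 1) (hh : ∀ x ∈ Om d, ∀ l : ℝ, 0 < l → u (l • x) = l⁻¹ • u x)
    (ha : AxisymOn u (Om d)) {x : V3} (h : ‖x‖ = 1) (hy : x 2 ∈ Set.Ioo (-1) (-1 + d)) :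
    rho x ^ 2 = 1 - x 2 ^ 2 ∧ rho x * uTc u x = (1 - x 2 ^ 2) * Nf u (x 2) ∧
    uRc u x = Cf u (x 2) - x 2 * Nf u (x 2) ∧ rho x * uPc u x = (1 - x 2 ^ 2) * Bf u (x 2) := by
  have hx := unit_mem h hy
  obtain ⟨v0, v1, v2⟩ := rep_vals h (rep_ax hd hh ha hx)
  have hn := norm3_sq x
  rw [h] at hn
  have hr2 : rho x ^ 2 = 1 - x 2 ^ 2 := by
    unfold rho
    rw [Real.sq_sqrt (by positivity)]; linarith
  have hpos : 0 < 1 - x 2 ^ 2 := by nlinarith [hy.1, hy.2]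
  have hr0 : rho x ≠ 0 := by
    intro h0; rw [h0] at hr2; norm_num at hr2; linarith
  refine ⟨hr2, ?_, ?_, ?_⟩
  · unfold uTc
    rw [v0, v1, v2, h]
    field_simp
    rw [hr2]
    linear_combination - x 2 * Cf u (x 2) * hn
  · unfold uRc
    rw [v0, v1, v2, h, div_one]
    linear_combination - Cf u (x 2) * hn
  · unfold uPc
    rw [v0, v1]
    field_simp
    linear_combination - Bf u (x 2) * hn

lemma odes (hd : d ≤ 1) (hh : ∀ x ∈ Om d, ∀ l : ℝ, 0 < l → u (l • x) = l⁻¹ • u x)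
    (hph : ∀ x ∈ Om d, ∀ l : ℝ, 0 < l → p (l • x) = (l ^ 2)⁻¹ * p x)
    (ha : AxisymOn u (Om d)) (hu : ∀ x ∈ Om d, ContDiffAt ℝ 2 u x)
    (hp : ∀ x ∈ Om d, DifferentiableAt ℝ p x) (hNS : ∀ x ∈ Om d, NSEq u p x)
    {y : ℝ} (hy : y ∈ Set.Ioo (-1) (-1 + d)) :
    DifferentiableAt ℝ (fun y => p (gam y)) y ∧
    Cf u y + y * Nf u y - (1 - y ^ 2) * deriv (Nf u) y = 0 ∧
    (1 - y ^ 2) * (deriv (deriv (Cf u)) y - 2 * deriv (Nf u) y - y * deriv (deriv (Nf u)) y)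
      + (-2 * y + (1 - y ^ 2) * Nf u y) * (deriv (Cf u) y - Nf u y - y * deriv (Nf u) y)
      + (Cf u y - y * Nf u y) ^ 2 + (1 - y ^ 2) * (Nf u y ^ 2 + Bf u y ^ 2) + 2 * p (gam y) = 0 ∧
    (2 * Bf u y + 4 * y * deriv (Bf u) y - (1 - y ^ 2) * deriv (deriv (Bf u)) y
      + 2 * y * Nf u y * Bf u y - (1 - y ^ 2) * Nf u y * deriv (Bf u) y = 0) ∧
    (deriv (fun y => p (gam y)) y - (deriv (Cf u) y - Nf u y - y * deriv (Nf u) y) + Nf u y * (Cf u y - y * Nf u y)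
      + y * Nf u y ^ 2 + y * Bf u y ^ 2 = 0) := by
  have hg : ∀ {y : ℝ}, y ∈ Set.Ioo (-1) (-1 + d) → ‖gam y‖ = 1 := fun h =>
    gam_norm h.1.le (by linarith [h.2])
  have hdiv : ∀ {y : ℝ}, y ∈ Set.Ioo (-1) (-1 + d) →
      Cf u y + y * Nf u y - (1 - y ^ 2) * deriv (Nf u) y = 0 := by
    intro y hy
    obtain ⟨c1, c2, c3⟩ := prof_cd hd hu hy
    have := ns_div (hg hy) (rep_ax hd hh ha (gam_mem hd hy)) c1 c2 c3 (hNS _ (gam_mem hd hy))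
    simpa only [gam2] using this
  have hr : ∀ {x : V3}, ‖x‖ = 1 → x ∈ Om d → 
    (1 - x 2 ^ 2) * (deriv (deriv (Cf u)) (x 2) - 2 * deriv (Nf u) (x 2) - x 2 * deriv (deriv (Nf u)) (x 2))
      + (-2 * x 2 + (1 - x 2 ^ 2) * Nf u (x 2)) * (deriv (Cf u) (x 2) - Nf u (x 2) - x 2 * deriv (Nf u) (x 2))
      + (Cf u (x 2) - x 2 * Nf u (x 2)) ^ 2 + (1 - x 2 ^ 2) * (Nf u (x 2) ^ 2 + Bf u (x 2) ^ 2) + 2 * p x = 0 := by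
    intro x hx hm
    have hY := (Om_iff (Om_ne hm)).1 hm
    rw [mq_unit _ _ hx] at hY
    obtain ⟨c1, c2, c3⟩ := prof_cd hd hu hY
    exact ns_r hx (rep_ax hd hh ha hm) c1 c2 c3 (hNS _ hm) (euler_p (hp _ hm) (hph _ hm))
  have hpu : ∀ {x : V3}, ‖x‖ = 1 → x ∈ Om d → p x = p (gam (x 2)) := by
    intro x hx hm
    have hY := (Om_iff (Om_ne hm)).1 hm
    rw [mq_unit _ _ hx] at hY
    have e1 := hr hx hm
    have e2 := hr (hg hY) (gam_mem hd hY)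
    rw [gam2] at e2
    linarith
  have hpz : ∀ {z : V3}, z ∈ Om d → p z = qn 2 z * (fun y => p (gam y)) (mq 2 1 z) := by
    intro z hz
    have hpos := Om_pos hz
    have hm := Om_smul (inv_pos.2 hpos) hz
    have hn : ‖‖z‖⁻¹ • z‖ = 1 := by
      rw [norm_smul, norm_inv, norm_norm, inv_mul_cancel₀ hpos.ne']
    have e1 := hph _ hz _ (inv_pos.2 hpos)
    rw [hpu hn hm] at e1
    have e2 : (‖z‖⁻¹ • z) 2 = mq 2 1 z := by
      rw [mq21]; simp; ring
    rw [e2] at e1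
    simp only [qn]
    rw [e1]
    field_simp
  have hPd : DifferentiableAt ℝ (fun y => p (gam y)) y :=
    (hp _ (gam_mem hd hy)).comp y ((gam_cd ⟨hy.1, by linarith [hy.2]⟩).differentiableAt (by norm_num))
  obtain ⟨c1, c2, c3⟩ := prof_cd hd hu hy
  have hd1 : deriv (Cf u) y + Nf u y + 3 * y * deriv (Nf u) y - (1 - y ^ 2) * deriv (deriv (Nf u)) y = 0 := by
    have k1 : HasDerivAt (fun y => Cf u y + y * Nf u y - (1 - y ^ 2) * deriv (Nf u) y)
        (deriv (Cf u) y + (1 * Nf u y + y * deriv (Nf u) y) -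
          ((-(2 * y)) * deriv (Nf u) y + (1 - y ^ 2) * deriv (deriv (Nf u)) y)) y := by
      have q : HasDerivAt (fun y : ℝ => 1 - y ^ 2) (-(2 * y)) y := by
        simpa using (hasDerivAt_pow 2 y).const_sub 1
      exact ((cd_diff c1).hasDerivAt.add ((hasDerivAt_id y).mul (cd_diff c3).hasDerivAt)).sub
        (q.mul (cd_deriv c3).hasDerivAt)
    have k2 : (fun y => Cf u y + y * Nf u y - (1 - y ^ 2) * deriv (Nf u) y) =ᶠ[𝓝 y] fun _ => 0 := by
      filter_upwards [isOpen_Ioo.mem_nhds hy] with z hz using hdiv hz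
    have k3 := k1.unique ((hasDerivAt_const y (0:ℝ)).congr_of_eventuallyEq k2)
    linarith
  have hm := gam_mem hd hy
  have hpe : p =ᶠ[𝓝 (gam y)] fun z => qn 2 z * (fun y => p (gam y)) (mq 2 1 z) := by
    filter_upwards [(Om_open d).mem_nhds hm] with z hz using hpz hz
  have hpos : 0 < 1 - y ^ 2 := by nlinarith [hy.1, hy.2]
  have ax := ns_axis (hg hy) (rep_ax hd hh ha hm) (by rwa [gam2]) (by rwa [gam2]) (by rwa [gam2])
    (hNS _ hm) (by rwa [gam2]) hpe (gam1 y) (by rw [gam0]; exact (Real.sqrt_pos.2 hpos).ne')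
    (by rw [gam2]; exact hd1)
  have e2 := hr (hg hy) hm
  rw [gam2] at e2 ax
  exact ⟨hPd, hdiv hy, e2, ax.1, ax.2⟩
end setup


/-- profile of `u_r` -/
def Hf (u : V3 → V3) (y : ℝ) : ℝ := Cf u y - y * Nf u y
def Hf1 (u : V3 → V3) (y : ℝ) : ℝ := deriv (Cf u) y - Nf u y - y * deriv (Nf u) y
def Ff (u : V3 → V3) (y : ℝ) : ℝ := (1 - y ^ 2) * Nf u y
def Gf (u : V3 → V3) (y : ℝ) : ℝ := (1 - y ^ 2) * Bf u y
def Gf1 (u : V3 → V3) (y : ℝ) : ℝ := (1 - y ^ 2) * deriv (Bf u) y - 2 * y * Bf u y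
def Kf (u : V3 → V3) (p : V3 → ℝ) (y : ℝ) : ℝ :=
  (1 - y ^ 2) * Bf u y ^ 2 + 2 * p (gam y) - 2 * Hf u y + (1 - y ^ 2) * Nf u y ^ 2

lemma odes_y {u : V3 → V3} {p : V3 → ℝ} {d : ℝ}
    (hd : d ≤ 1) (hh : ∀ x ∈ Om d, ∀ l : ℝ, 0 < l → u (l • x) = l⁻¹ • u x)
    (hph : ∀ x ∈ Om d, ∀ l : ℝ, 0 < l → p (l • x) = (l ^ 2)⁻¹ * p x)
    (ha : AxisymOn u (Om d)) (hu : ∀ x ∈ Om d, ContDiffAt ℝ 2 u x)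
    (hp : ∀ x ∈ Om d, DifferentiableAt ℝ p x) (hNS : ∀ x ∈ Om d, NSEq u p x)
    {y : ℝ} (hy : y ∈ Set.Ioo (-1) (-1 + d)) :
    HasDerivAt (Ff u) (Hf u y) y ∧ HasDerivAt (Hf u) (Hf1 u y) y ∧
    HasDerivAt (fun y => (1 - y ^ 2) * Hf1 u y + Ff u y * Hf u y + 2 * Ff u y) (-Kf u p y) y ∧
    HasDerivAt (Kf u p) (2 * Gf u y * Gf1 u y / (1 - y ^ 2)) y ∧
    HasDerivAt (Gf u) (Gf1 u y) y ∧
    HasDerivAt (Gf1 u) (-(Ff u y * Gf1 u y) / (1 - y ^ 2)) y := by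
  obtain ⟨hP, e1, e2, e3, e4⟩ := odes hd hh hph ha hu hp hNS hy
  obtain ⟨c1, c2, c3⟩ := prof_cd hd hu hy
  have hpos : 1 - y ^ 2 ≠ 0 := by nlinarith [hy.1, hy.2]
  have q : HasDerivAt (fun y : ℝ => 1 - y ^ 2) (-(2 * y)) y := by
    simpa using (hasDerivAt_pow 2 y).const_sub 1
  have hC := (cd_diff c1).hasDerivAt
  have hB := (cd_diff c2).hasDerivAt
  have hN := (cd_diff c3).hasDerivAt
  have hC1 := (cd_deriv c1).hasDerivAt
  have hB1 := (cd_deriv c2).hasDerivAt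
  have hN1 := (cd_deriv c3).hasDerivAt
  have hid := hasDerivAt_id y
  have kH : HasDerivAt (Hf u) (Hf1 u y) y := by
    refine (hC.sub (hid.mul hN)).congr_deriv ?_
    simp only [Hf1, id]; ring
  have kF : HasDerivAt (Ff u) (Hf u y) y := by
    refine (q.mul hN).congr_deriv ?_
    simp only [Hf]; linear_combination -e1
  have kH1 : HasDerivAt (Hf1 u) (deriv (deriv (Cf u)) y - 2 * deriv (Nf u) y - y * deriv (deriv (Nf u)) y) y := by
    refine ((hC1.sub hN).sub (hid.mul hN1)).congr_deriv ?_
    simp only [id]; ring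
  have kG : HasDerivAt (Gf u) (Gf1 u y) y := by
    refine (q.mul hB).congr_deriv ?_
    simp only [Gf1]; ring
  refine ⟨kF, kH, ?_, ?_, kG, ?_⟩
  · refine (((q.mul kH1).add (kF.mul kH)).add (kF.const_mul 2)).congr_deriv ?_
    simp only [Kf, Hf, Hf1, Ff]
    linear_combination e2
  · refine ((((q.mul (hB.pow 2)).add (hP.hasDerivAt.const_mul 2)).sub (kH.const_mul 2)).add (q.mul (hN.pow 2))).congr_deriv ?_
    rw [eq_div_iff hpos]
    simp only [Gf, Gf1, Hf1, Pi.pow_apply]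
    push_cast
    linear_combination (2 * (1 - y ^ 2)) * e4 - 2 * Nf u y * (1 - y ^ 2) * e1
  · refine ((q.mul hB1).sub ((hid.const_mul 2).mul hB)).congr_deriv ?_
    rw [eq_div_iff hpos]
    simp only [Ff, Gf1, id]
    linear_combination -(1 - y ^ 2) * e3

lemma main_ode {u : V3 → V3} {p : V3 → ℝ} {d : ℝ} (hd0 : 0 < d)
    (hd : d ≤ 1) (hh : ∀ x ∈ Om d, ∀ l : ℝ, 0 < l → u (l • x) = l⁻¹ • u x)
    (hph : ∀ x ∈ Om d, ∀ l : ℝ, 0 < l → p (l • x) = (l ^ 2)⁻¹ * p x)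
    (ha : AxisymOn u (Om d)) (hu : ∀ x ∈ Om d, ContDiffAt ℝ 2 u x)
    (hp : ∀ x ∈ Om d, DifferentiableAt ℝ p x) (hNS : ∀ x ∈ Om d, NSEq u p x)
    (hF2 : Tendsto (fun t => Ff u (t - 1)) (𝓝[>] 0) (𝓝 2)) :
    (Tendsto (fun t => (Ff u (t - 1) - 2) * log t) (𝓝[>] 0) (𝓝 0) ∧
      (∀ ε > (0:ℝ), Tendsto (fun t => t ^ ε * Hf u (t - 1)) (𝓝[>] 0) (𝓝 0)) ∧
      ((∃ c, ∀ᶠ t in 𝓝[>] 0, Gf u (t - 1) = c) ∨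
        (∃ L, L ≠ 0 ∧ Tendsto (fun t => Gf u (t - 1) / log t) (𝓝[>] 0) (𝓝 L)))) ∨
    (Tendsto (fun t => (Ff u (t - 1) - 2) * log t) (𝓝[>] 0) (𝓝 4) ∧
      Tendsto (fun t => t * (log t) ^ 2 * Hf u (t - 1)) (𝓝[>] 0) (𝓝 (-4)) ∧
      ∃ L, Tendsto (fun t => Gf u (t - 1)) (𝓝[>] 0) (𝓝 L)) := by
  have hI : ∀ᶠ t in 𝓝[>] (0:ℝ), t - 1 ∈ Set.Ioo (-1) (-1 + d) := by
    filter_upwards [Ioo_mem_nhdsGT hd0] with t ht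
    exact ⟨by linarith [ht.1], by linarith [ht.2]⟩
  have hq : ∀ t : ℝ, 1 - (t - 1) ^ 2 = t * (2 - t) := fun t => by ring
  have hall := hI.mono fun t ht => odes_y hd hh hph ha hu hp hNS ht
  refine ode_analysis (F := fun t => Ff u (t - 1)) (H := fun t => Hf u (t - 1))
    (H1 := fun t => Hf1 u (t - 1)) (G := fun t => Gf u (t - 1)) (G1 := fun t => Gf1 u (t - 1))
    (K := fun t => Kf u p (t - 1)) ?_ ?_ ?_ ?_ ?_ ?_ hF2
  · exact hall.mono fun t h => h.1.comp_sub_const t 1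
  · exact hall.mono fun t h => h.2.1.comp_sub_const t 1
  · refine hall.mono fun t h => ?_
    have := h.2.2.1.comp_sub_const t 1
    simpa only [hq] using this
  · refine hall.mono fun t h => ?_
    have := h.2.2.2.1.comp_sub_const t 1
    simpa only [hq] using this
  · exact hall.mono fun t h => h.2.2.2.2.1.comp_sub_const t 1
  · refine hall.mono fun t h => ?_
    have := h.2.2.2.2.2.comp_sub_const t 1
    simpa only [hq] using this


lemma S3_2 : S3 2 = -1 := by simp [S3]

lemma sph_S3 {x : V3} (h : ‖x‖ = 1) (h2 : x 2 = -1) : x = S3 := by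
  have hn := norm3_sq x
  rw [h, h2] at hn
  have h0 : x 0 = 0 := by nlinarith [sq_nonneg (x 0), sq_nonneg (x 1)]
  have h1 : x 1 = 0 := by nlinarith [sq_nonneg (x 0), sq_nonneg (x 1)]
  ext i
  fin_cases i
  · simpa [S3] using h0
  · simpa [S3] using h1
  · simpa [S3] using h2

lemma T_tend : Tendsto (fun x : V3 => x 2 + 1) (𝓝[sphere2 \ {S3}] S3) (𝓝[>] 0) := by
  rw [tendsto_nhdsWithin_iff]
  constructor
  · have h2 : Continuous fun x : V3 => x 2 + 1 := (EuclideanSpace.proj 2 : V3 →L[ℝ] ℝ).continuous.add continuous_const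
    have := h2.tendsto S3
    rw [S3_2, neg_add_cancel] at this
    exact this.mono_left nhdsWithin_le_nhds
  · filter_upwards [self_mem_nhdsWithin] with x hx
    have h1 : ‖x‖ = 1 := mem_sphere_zero_iff_norm.1 hx.1
    have hn := norm3_sq x
    rw [h1] at hn
    have h3 : x 2 ≠ -1 := fun h => hx.2 (sph_S3 h1 h)
    have h4 : -1 ≤ x 2 := by nlinarith [sq_nonneg (x 0), sq_nonneg (x 1)]
    have := lt_of_le_of_ne h4 h3.symm
    simp only [Set.mem_Ioi]; linarith

lemma gam_cont : Continuous gam := by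
  have h : Continuous fun y : ℝ => √(1 - y ^ 2) := by fun_prop
  unfold gam
  apply (PiLp.continuous_toLp 2 _).comp
  apply continuous_pi
  intro i
  fin_cases i
  · exact h
  · exact continuous_const
  · exact continuous_id

lemma gam_tend : Tendsto (fun t : ℝ => gam (t - 1)) (𝓝[>] 0) (𝓝[sphere2 \ {S3}] S3) := by
  rw [tendsto_nhdsWithin_iff]
  constructor
  · have hc : Continuous fun t : ℝ => gam (t - 1) := gam_cont.comp (continuous_id.sub continuous_const)
    have := hc.tendsto 0
    have e : gam (0 - 1) = S3 := sph_S3 (gam_norm (by norm_num) (by norm_num)) (by rw [gam2]; norm_num)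
    simp only [e] at this
    exact this.mono_left nhdsWithin_le_nhds
  · filter_upwards [Ioo_mem_nhdsGT (zero_lt_one' ℝ)] with t ht
    refine ⟨mem_sphere_zero_iff_norm.2 (gam_norm (by linarith [ht.1]) (by linarith [ht.2])), ?_⟩
    intro h
    have : gam (t - 1) 2 = S3 2 := congrArg (fun v : V3 => v 2) h
    rw [gam2, S3_2] at this
    linarith [ht.1]

lemma logq_tend : Tendsto (fun t : ℝ => log (√(t * (2 - t))) / log t) (𝓝[>] 0) (𝓝 (1 / 2)) := by
  have h1 : Tendsto (fun t : ℝ => log (2 - t)) (𝓝[>] 0) (𝓝 (log 2)) := by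
    have : ContinuousAt (fun t : ℝ => log (2 - t)) 0 := by
      apply ContinuousAt.log (by fun_prop); norm_num
    have h := this.tendsto
    simp only [sub_zero] at h
    exact h.mono_left nhdsWithin_le_nhds
  have h2 : Tendsto (fun t : ℝ => log (2 - t) / log t) (𝓝[>] 0) (𝓝 0) :=
    h1.div_atBot tendsto_log_nhdsGT_zero
  have h3 : Tendsto (fun t : ℝ => 1 / 2 + 1 / 2 * (log (2 - t) / log t)) (𝓝[>] 0) (𝓝 (1 / 2)) := by
    have := (h2.const_mul (1 / 2)).const_add (1 / 2)
    simpa using this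
  refine h3.congr' ?_
  filter_upwards [Ioo_mem_nhdsGT (zero_lt_one' ℝ)] with t ht
  have hl : log t ≠ 0 := (Real.log_neg ht.1 ht.2).ne
  have h2t : (2 - t) ≠ 0 := by linarith [ht.2]
  rw [Real.log_sqrt (by nlinarith [ht.1, ht.2]), Real.log_mul ht.1.ne' h2t]
  field_simp

/-- expansion when `τ = 2`. -/
theorem expansion_tau_eq_two (δ : ℝ) (hδ : 0 < δ) (u : V3 → V3) (p : V3 → ℝ)
    (hu_hom : ∀ x ∈ cone3 (NSCap δ), ∀ lam : ℝ, 0 < lam → u (lam • x) = lam⁻¹ • u x)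
    (hp_hom : ∀ x ∈ cone3 (NSCap δ), ∀ lam : ℝ, 0 < lam → p (lam • x) = (lam ^ 2)⁻¹ * p x)
    (hu_reg : ContDiffOn ℝ 2 u (cone3 (NSCap δ)))
    (hp_reg : ContDiffOn ℝ 1 p (cone3 (NSCap δ)))
    (haxi : AxisymOn u (cone3 (NSCap δ)))
    (hNS : ∀ x ∈ cone3 (NSCap δ), NSEq u p x)
    (hτ : Tendsto (fun x => rho x * uTc u x) (𝓝[sphere2 \ {S3}] S3) (𝓝 2)) :
    ∃ η : ℝ,
      Tendsto (fun x => (rho x * uTc u x - 2) * Real.log (rho x))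
        (𝓝[sphere2 \ {S3}] S3) (𝓝 η) ∧
      (η = 0 ∨ η = 2) ∧
      (η = 0 →
        (∀ ε > (0:ℝ), Tendsto (fun x => rho x ^ ε * uRc u x)
          (𝓝[sphere2 \ {S3}] S3) (𝓝 0)) ∧
        ((∃ c : ℝ, ∀ᶠ x in 𝓝[sphere2 \ {S3}] S3, rho x * uPc u x = c) ∨
          (∃ L : ℝ, L ≠ 0 ∧ Tendsto (fun x => rho x * uPc u x / Real.log (rho x))
            (𝓝[sphere2 \ {S3}] S3) (𝓝 L)))) ∧
      (η = 2 →
        Tendsto (fun x => rho x ^ 2 * (Real.log (rho x)) ^ 2 * uRc u x)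
          (𝓝[sphere2 \ {S3}] S3) (𝓝 (-2)) ∧
        ∃ L : ℝ, Tendsto (fun x => rho x * uPc u x) (𝓝[sphere2 \ {S3}] S3) (𝓝 L)) := by
  set d : ℝ := min (δ ^ 2 / 2) 1 with hdd
  have hd0 : 0 < d := lt_min (by positivity) one_pos
  have hd : d ≤ 1 := min_le_right _ _
  have hsub : Om d ⊆ cone3 (NSCap δ) := Om_sub hδ (min_le_left _ _)
  have hh : ∀ x ∈ Om d, ∀ l : ℝ, 0 < l → u (l • x) = l⁻¹ • u x := fun x hx => hu_hom x (hsub hx)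
  have ha : AxisymOn u (Om d) := fun x hx y hy => haxi x (hsub hx) y (hsub hy)
  have hnb : ∀ x ∈ Om d, cone3 (NSCap δ) ∈ 𝓝 x := fun x hx =>
    mem_of_superset ((Om_open d).mem_nhds hx) hsub
  have hev : ∀ᶠ x in 𝓝[sphere2 \ {S3}] S3,
      rho x = √((x 2 + 1) * (2 - (x 2 + 1))) ∧ rho x * uTc u x = Ff u (x 2 + 1 - 1) ∧
      uRc u x = Hf u (x 2 + 1 - 1) ∧ rho x * uPc u x = Gf u (x 2 + 1 - 1) := by
    filter_upwards [self_mem_nhdsWithin, T_tend.eventually (Ioo_mem_nhdsGT hd0)] with x hx ht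
    have h1 : ‖x‖ = 1 := mem_sphere_zero_iff_norm.1 hx.1
    have hy : x 2 ∈ Set.Ioo (-1) (-1 + d) := ⟨by linarith [ht.1], by linarith [ht.2]⟩
    obtain ⟨a1, a2, a3, a4⟩ := sph_vals hd hh ha h1 hy
    rw [add_sub_cancel_right]
    refine ⟨?_, a2, a3, a4⟩
    rw [← Real.sqrt_sq (show 0 ≤ rho x from Real.sqrt_nonneg _), a1]
    congr 1; ring
  have hF2 : Tendsto (fun t => Ff u (t - 1)) (𝓝[>] 0) (𝓝 2) := by
    refine (hτ.comp gam_tend).congr' ?_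
    filter_upwards [gam_tend.eventually hev] with t ht
    rw [Function.comp_apply, ht.2.1, gam2]
    congr 1; ring
  have hres := main_ode hd0 hd hh (fun x hx => hp_hom x (hsub hx)) ha
    (fun x hx => hu_reg.contDiffAt (hnb x hx))
    (fun x hx => (hp_reg.contDiffAt (hnb x hx)).differentiableAt (by norm_num))
    (fun x hx => hNS x (hsub hx)) hF2
  have hsm : ∀ᶠ t in 𝓝[>] (0:ℝ), t ∈ Set.Ioo (0:ℝ) 1 := Ioo_mem_nhdsGT one_pos
  have h2t : Tendsto (fun t : ℝ => 2 - t) (𝓝[>] 0) (𝓝 2) := by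
    have : Continuous fun t : ℝ => 2 - t := by fun_prop
    have h := this.tendsto 0
    simp only [sub_zero] at h
    exact h.mono_left nhdsWithin_le_nhds
  have hη : ∀ l : ℝ, Tendsto (fun t => (Ff u (t - 1) - 2) * log t) (𝓝[>] 0) (𝓝 l) →
      Tendsto (fun x => (rho x * uTc u x - 2) * Real.log (rho x)) (𝓝[sphere2 \ {S3}] S3) (𝓝 (l * (1 / 2))) := by
    intro l hl
    refine ((hl.mul logq_tend).comp T_tend).congr' ?_
    filter_upwards [hev, T_tend.eventually hsm] with x hx ht
    have hlt : log (x 2 + 1) ≠ 0 := (Real.log_neg ht.1 ht.2).ne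
    rw [Function.comp_apply, hx.2.1, hx.1]
    field_simp
  rcases hres with ⟨r1, r2, r3⟩ | ⟨r1, r2, L, r3⟩
  · refine ⟨0, by simpa using hη 0 r1, Or.inl rfl, fun _ => ⟨?_, ?_⟩, fun h => by norm_num at h⟩
    · intro ε hε
      have h1 := (r2 (ε / 2) (by positivity)).mul (h2t.rpow_const (p := ε / 2) (Or.inl two_ne_zero))
      rw [zero_mul] at h1
      refine (h1.comp T_tend).congr' ?_
      filter_upwards [hev, T_tend.eventually hsm] with x hx ht
      rw [Function.comp_apply, hx.2.2.1, hx.1, Real.sqrt_eq_rpow, ← Real.rpow_mul (by nlinarith [ht.1, ht.2]),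
        Real.mul_rpow ht.1.le (by linarith [ht.2]), show 1 / 2 * ε = ε / 2 by ring]
      ring
    · rcases r3 with ⟨c, hc⟩ | ⟨L, hL, hLt⟩
      · left
        refine ⟨c, ?_⟩
        filter_upwards [hev, T_tend.eventually hc] with x hx ht
        rw [hx.2.2.2, ht]
      · right
        refine ⟨L / (1 / 2), by positivity, ?_⟩
        refine ((hLt.div logq_tend (by norm_num)).comp T_tend).congr' ?_
        filter_upwards [hev, T_tend.eventually hsm] with x hx ht
        have hlt : log (x 2 + 1) ≠ 0 := (Real.log_neg ht.1 ht.2).ne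
        rw [Function.comp_apply, hx.2.2.2, hx.1]
        exact div_div_div_cancel_right₀ hlt _ _
  · refine ⟨2, ?_, Or.inr rfl, fun h => by norm_num at h, fun _ => ⟨?_, L, ?_⟩⟩
    · have := hη 4 r1
      norm_num at this
      exact this
    · have h1 := (r2.mul h2t).mul (logq_tend.pow 2)
      norm_num at h1
      refine (h1.comp T_tend).congr' ?_
      filter_upwards [hev, T_tend.eventually hsm] with x hx ht
      have hlt : log (x 2 + 1) ≠ 0 := (Real.log_neg ht.1 ht.2).ne
      have hsq : √((x 2 + 1) * (2 - (x 2 + 1))) ^ 2 = (x 2 + 1) * (2 - (x 2 + 1)) :=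
        Real.sq_sqrt (by nlinarith [ht.1, ht.2])
      rw [Function.comp_apply, hx.2.2.1, hx.1, hsq]
      generalize log √((x 2 + 1) * (2 - (x 2 + 1))) = q
      field_simp
    · refine (r3.comp T_tend).congr' ?_
      filter_upwards [hev] with x hx
      rw [Function.comp_apply, hx.2.2.2]
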